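/- Let φ be subharmonic on ℂ with Δφ a doubling measure, and ρ_φ the associated radius function. There exist a C^∞ subharmonic function ψ on ℂ and a constant C > 0 such that |ψ − φ| ≤ C on ℂ, Δψ is a doubling measure, Δψ is comparable to 1/ρ_ψ² and to 1/ρ_φ² (with uniform constants), and moreover |∇(Δψ)| ≲ 1/ρ_φ³. -/

import Mathlib

open MeasureTheory Metric Filter Set
open scoped ENNReal NNReal Real Topology Classical

noncomputable section

/-- The Laplacian of a function on `ℂ ≅ ℝ²`, computed via the second Fréchet derivative. -/
def lap (v : ℂ → ℝ) (z : ℂ) : ℝ :=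
  iteratedFDeriv ℝ 2 v z ![1, 1] + iteratedFDeriv ℝ 2 v z ![Complex.I, Complex.I]

/-- `μ` is a doubling measure on `ℂ` with doubling constant `C`. -/
def IsDoubling (μ : Measure ℂ) (C : ℝ≥0) : Prop :=
  ∀ z : ℂ, ∀ r : ℝ, 0 < r → μ (ball z (2 * r)) ≤ C * μ (ball z r)

/-- `φ` is a (continuous) subharmonic function whose distributional Laplacian is the
doubling measure `μ` (not identically zero).  The distributional identity is expressed
by testing against smooth compactly supported functions. -/
structure HasDoublingLaplacian (φ : ℂ → ℝ) (μ : Measure ℂ) : Prop where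
  continuous : Continuous φ
  lap_eq : ∀ v : ℂ → ℝ, ContDiff ℝ (⊤ : ℕ∞) v → HasCompactSupport v →
    ∫ z, φ z * lap v z = ∫ z, v z ∂μ
  doubling : ∃ C : ℝ≥0, 0 < C ∧ IsDoubling μ C
  ne_zero : μ ≠ 0

/-- `ρ` assigns to every `z` the positive radius such that the disk `D(z, ρ z)` has
`μ`-mass `1`. -/
def IsRadius (μ : Measure ℂ) (ρ : ℂ → ℝ) : Prop :=
  ∀ z : ℂ, 0 < ρ z ∧ μ (ball z (ρ z)) = 1

/-- The distance induced by the metric `ρ(z)⁻² dz⊗d\bar z`: infimum of lengths of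
`C¹` curves joining the two points. -/
def pathDist (ρ : ℂ → ℝ) (z ζ : ℂ) : ℝ :=
  sInf { L : ℝ | ∃ γ : ℝ → ℂ, γ 0 = z ∧ γ 1 = ζ ∧ ContDiff ℝ 1 γ ∧
    L = ∫ t in (0:ℝ)..1, ‖deriv γ t‖ / ρ (γ t) }

/-- The `pathDist` from a point to a set. -/
def pathDistSet (ρ : ℂ → ℝ) (z : ℂ) (Λ : Set ℂ) : ℝ :=
  ⨅ l : Λ, pathDist ρ z l.1

/-- A flat weight for `φ`: a positive measurable function whose logarithm has slow
growth with respect to the induced distance. -/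
def IsFlatWeight (ρ : ℂ → ℝ) (ω : ℂ → ℝ) : Prop :=
  (∀ z, 0 < ω z) ∧ Measurable ω ∧
  ∃ C : ℝ, 0 < C ∧ ∀ z ζ : ℂ,
    |Real.log (ω z) - Real.log (ω ζ)| ≤ C * (1 + max (Real.log (pathDist ρ z ζ)) 0)

/-- The norm of the space `F^p_{φ,ω}` (with `p = ∞` giving the weighted sup norm). -/
def Fnorm (p : ℝ≥0∞) (φ ω ρ : ℂ → ℝ) (f : ℂ → ℂ) : ℝ≥0∞ :=
  if p = ∞ then ⨆ z : ℂ, ENNReal.ofReal (ω z * ‖f z‖ * Real.exp (-φ z))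
  else (∫⁻ z, ENNReal.ofReal
      (‖f z‖ ^ p.toReal * Real.exp (-(p.toReal * φ z)) * ω z ^ p.toReal / ρ z ^ 2)) ^
      (1 / p.toReal)

/-- Membership in `F^p_{φ,ω}`: entire with finite norm. -/
def MemF (p : ℝ≥0∞) (φ ω ρ : ℂ → ℝ) (f : ℂ → ℂ) : Prop :=
  Differentiable ℂ f ∧ Fnorm p φ ω ρ f < ∞

/-- The norm of the sequence space `ℓ^p_{φ,ω}(Λ)`. -/
def lnorm (p : ℝ≥0∞) (φ ω : ℂ → ℝ) (Λ : Set ℂ) (v : ℂ → ℂ) : ℝ≥0∞ :=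
  if p = ∞ then ⨆ l : Λ, ENNReal.ofReal (ω l.1 * ‖v l.1‖ * Real.exp (-φ l.1))
  else (∑' l : Λ, ENNReal.ofReal
      (ω l.1 ^ p.toReal * ‖v l.1‖ ^ p.toReal * Real.exp (-(p.toReal * φ l.1)))) ^
      (1 / p.toReal)

/-- `Λ` is a sampling sequence for `F^p_{φ,ω}`. -/
def IsSampling (p : ℝ≥0∞) (φ ω ρ : ℂ → ℝ) (Λ : Set ℂ) : Prop :=
  if p = ∞ then
    ∃ C : ℝ≥0, 0 < C ∧ ∀ f : ℂ → ℂ, MemF ∞ φ ω ρ f →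
      Fnorm ∞ φ ω ρ f ≤ C * lnorm ∞ φ ω Λ f
  else
    ∃ C : ℝ≥0, 0 < C ∧ ∀ f : ℂ → ℂ, MemF p φ ω ρ f →
      (C : ℝ≥0∞)⁻¹ * lnorm p φ ω Λ f ≤ Fnorm p φ ω ρ f ∧
      Fnorm p φ ω ρ f ≤ C * lnorm p φ ω Λ f

/-- `Λ` is an interpolating sequence for `F^p_{φ,ω}`. -/
def IsInterpolating (p : ℝ≥0∞) (φ ω ρ : ℂ → ℝ) (Λ : Set ℂ) : Prop :=
  ∀ v : ℂ → ℂ, lnorm p φ ω Λ v < ∞ →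
    ∃ f : ℂ → ℂ, MemF p φ ω ρ f ∧ ∀ l ∈ Λ, f l = v l

/-- `Λ` is `ρ`-separated. -/
def RhoSeparated (ρ : ℂ → ℝ) (Λ : Set ℂ) : Prop :=
  ∃ δ : ℝ, 0 < δ ∧ ∀ l ∈ Λ, ∀ l' ∈ Λ, l ≠ l' → δ * max (ρ l) (ρ l') ≤ dist l l'

/-- `Λ` is a finite union of `ρ`-separated sequences. -/
def FiniteUnionSeparated (ρ : ℂ → ℝ) (Λ : Set ℂ) : Prop :=
  ∃ n : ℕ, ∃ Λs : Fin n → Set ℂ, Λ = ⋃ i, Λs i ∧ ∀ i, RhoSeparated ρ (Λs i)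

/-- Upper uniform density of `Λ` with respect to the doubling measure `μ`. -/
def upperUnifDensity (μ : Measure ℂ) (ρ : ℂ → ℝ) (Λ : Set ℂ) : ℝ≥0∞ :=
  limsup (fun r : ℝ =>
    ⨆ z : ℂ, Measure.count (Λ ∩ closedBall z (r * ρ z)) / μ (ball z (r * ρ z))) atTop

/-- Lower uniform density of `Λ` with respect to the doubling measure `μ`. -/
def lowerUnifDensity (μ : Measure ℂ) (ρ : ℂ → ℝ) (Λ : Set ℂ) : ℝ≥0∞ :=
  liminf (fun r : ℝ =>
    ⨅ z : ℂ, Measure.count (Λ ∩ closedBall z (r * ρ z)) / μ (ball z (r * ρ z))) atTop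

/-- The Cauchy–Riemann operator `∂̄` on `ℂ`-valued functions. -/
def dbar (v : ℂ → ℂ) (z : ℂ) : ℂ :=
  (fderiv ℝ v z 1 + Complex.I • fderiv ℝ v z Complex.I) / 2

/-- `∂̄ u = f` in the sense of distributions. -/
def IsDistribDbarOf (u f : ℂ → ℂ) : Prop :=
  ∀ v : ℂ → ℂ, ContDiff ℝ (⊤ : ℕ∞) v → HasCompactSupport v →
    ∫ z, f z * v z = - ∫ z, u z * dbar v z

/-- Closed axis-parallel rectangle with centre `a` and half-sides `s, t`. -/
def axisRect (a : ℂ) (s t : ℝ) : Set ℂ :=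
  {w : ℂ | |w.re - a.re| ≤ s ∧ |w.im - a.im| ≤ t}

/-!
Replace each point mass `δ_ζ` of `μ = Δφ` by a smooth radial probability density on the disk of
radius `ρ ζ / 8` about `ζ`. The logarithmic potential of that density agrees with the one of `δ_ζ`
outside the disk, so `ψ - φ` at `z` is an integral over `D(z, ρ z)` of functions with at most a
logarithmic singularity at `z`. Doubling forces `μ (D(z, ρ z / 2 ^ n))` to decay geometrically,
hence this integral is bounded uniformly in `z`. On the other hand `Δψ` at `z` averages densities
of height comparable to `ρ z ^ (-2)` over a set of mass comparable to `1`, because `ρ` is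
1-Lipschitz.
-/

/-! ### A smooth truncation of the logarithm -/

lemma deriv_eq_of_eqOn {f g : ℝ → ℝ} {s : Set ℝ} {x : ℝ} (hs : UniqueDiffWithinAt ℝ s x)
    (hx : x ∈ s) (hf : DifferentiableAt ℝ f x) (hg : DifferentiableAt ℝ g x) (hfg : EqOn f g s) :
    deriv f x = deriv g x := by
  rw [← hf.derivWithin hs, ← hg.derivWithin hs]
  exact derivWithin_congr hfg (hfg hx)

/-- A smooth cutoff on `ℝ`, equal to `1` on `(-∞, 1/2]` and to `0` on `[1, ∞)`. -/
def cutoff (x : ℝ) : ℝ := Real.smoothTransition (2 - 2 * x)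

lemma cutoff_of_le_half {x : ℝ} (hx : x ≤ 1 / 2) : cutoff x = 1 :=
  Real.smoothTransition.one_of_one_le (by linarith)

lemma cutoff_of_one_le {x : ℝ} (hx : 1 ≤ x) : cutoff x = 0 :=
  Real.smoothTransition.zero_of_nonpos (by linarith)

lemma cutoff_nonneg (x : ℝ) : 0 ≤ cutoff x := Real.smoothTransition.nonneg _

lemma cutoff_le_one (x : ℝ) : cutoff x ≤ 1 := Real.smoothTransition.le_one _

lemma cutoff_antitone : Antitone cutoff := fun _ _ h =>
  Real.smoothTransition.monotone (by linarith)

lemma contDiff_cutoff : ContDiff ℝ (⊤ : ℕ∞) cutoff :=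
  Real.smoothTransition.contDiff.comp (contDiff_const.sub (contDiff_const.mul contDiff_id))

/-- A smooth function on `ℝ` equal to `x⁻¹` for `1 ≤ x`; near `0` it is constant. -/
def smoothInv (x : ℝ) : ℝ := cutoff x + (1 - cutoff x) * x⁻¹

lemma smoothInv_of_le_half {x : ℝ} (hx : x ≤ 1 / 2) : smoothInv x = 1 := by
  simp [smoothInv, cutoff_of_le_half hx]

lemma smoothInv_of_one_le {x : ℝ} (hx : 1 ≤ x) : smoothInv x = x⁻¹ := by
  simp [smoothInv, cutoff_of_one_le hx]

lemma contDiff_smoothInv : ContDiff ℝ (⊤ : ℕ∞) smoothInv := by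
  refine contDiff_iff_contDiffAt.2 fun x => ?_
  rcases lt_or_ge x (1 / 2) with hx | hx
  · exact contDiffAt_const.congr_of_eventuallyEq <|
      (eventually_lt_nhds hx).mono fun y hy => smoothInv_of_le_half hy.le
  · exact contDiff_cutoff.contDiffAt.add <| (contDiffAt_const.sub contDiff_cutoff.contDiffAt).mul <|
      contDiffAt_inv ℝ (by linarith)

lemma abs_smoothInv_le_two (x : ℝ) : |smoothInv x| ≤ 2 := by
  rcases le_total x (1 / 2) with hx | hx
  · norm_num [smoothInv_of_le_half hx]
  · have hx2 : x⁻¹ ≤ 2 := inv_le_of_inv_le₀ (by norm_num) (by linarith)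
    have hx0 : 0 ≤ x⁻¹ := inv_nonneg.2 (by linarith)
    have h0 := cutoff_nonneg x
    have h1 := cutoff_le_one x
    rw [smoothInv, abs_le]
    constructor <;> nlinarith

/-- The primitive of `smoothInv` that agrees with `Real.log` on `[1, ∞)`. -/
def smoothLog (x : ℝ) : ℝ := ∫ y in (1 : ℝ)..x, smoothInv y

lemma hasDerivAt_smoothLog (x : ℝ) : HasDerivAt smoothLog (smoothInv x) x :=
  contDiff_smoothInv.continuous.integral_hasStrictDerivAt 1 x |>.hasDerivAt

lemma deriv_smoothLog : deriv smoothLog = smoothInv :=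
  funext fun x => (hasDerivAt_smoothLog x).deriv

lemma contDiff_smoothLog : ContDiff ℝ (⊤ : ℕ∞) smoothLog := by
  rw [contDiff_infty_iff_deriv, deriv_smoothLog]
  exact ⟨fun x => (hasDerivAt_smoothLog x).differentiableAt, contDiff_smoothInv⟩

lemma smoothLog_of_one_le {x : ℝ} (hx : 1 ≤ x) : smoothLog x = Real.log x := by
  have h : smoothLog x = ∫ y in (1 : ℝ)..x, y⁻¹ :=
    intervalIntegral.integral_congr fun y hy => smoothInv_of_one_le (uIcc_of_le hx ▸ hy).1
  rw [h, integral_inv_of_pos one_pos (one_pos.trans_le hx), div_one]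

lemma abs_smoothLog_le_two {x : ℝ} (h0 : 0 ≤ x) (h1 : x ≤ 1) : |smoothLog x| ≤ 2 :=
  calc ‖∫ y in (1 : ℝ)..x, smoothInv y‖ ≤ 2 * |x - 1| :=
        intervalIntegral.norm_integral_le_of_norm_le_const fun y _ => abs_smoothInv_le_two y
    _ ≤ 2 := by rw [abs_of_nonpos (by linarith)]; linarith

/-- The function `x · smoothLog' x`. As a function of `x = ‖w‖²` it is the mass that the Laplacian
of `smoothLog (‖w‖²) / 4π` puts on the disk of radius `‖w‖`. -/
def massProfile (x : ℝ) : ℝ := x * smoothInv x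

lemma massProfile_eq (x : ℝ) : massProfile x = 1 - cutoff x * (1 - x) := by
  rcases eq_or_ne x 0 with rfl | hx
  · simp [massProfile, cutoff_of_le_half]
  · rw [massProfile, smoothInv]
    field_simp
    ring

lemma massProfile_of_le_half {x : ℝ} (hx : x ≤ 1 / 2) : massProfile x = x := by
  rw [massProfile, smoothInv_of_le_half hx, mul_one]

lemma massProfile_of_one_le {x : ℝ} (hx : 1 ≤ x) : massProfile x = 1 := by
  rw [massProfile_eq, cutoff_of_one_le hx, zero_mul, sub_zero]

lemma monotone_massProfile : Monotone massProfile := by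
  intro x y hxy
  rw [massProfile_eq, massProfile_eq, sub_le_sub_iff_left]
  rcases le_total 1 y with hy | hy
  · rcases le_total 1 x with hx | hx
    · simp [cutoff_of_one_le hx, cutoff_of_one_le hy]
    · simpa [cutoff_of_one_le hy] using mul_nonneg (cutoff_nonneg x) (sub_nonneg.2 hx)
  · exact mul_le_mul (cutoff_antitone hxy) (by linarith) (by linarith) (cutoff_nonneg x)

lemma contDiff_massProfile : ContDiff ℝ (⊤ : ℕ∞) massProfile :=
  contDiff_id.mul contDiff_smoothInv

lemma differentiable_massProfile : Differentiable ℝ massProfile :=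
  contDiff_massProfile.differentiable (by simp)

lemma contDiff_deriv_massProfile : ContDiff ℝ (⊤ : ℕ∞) (deriv massProfile) :=
  (contDiff_infty_iff_deriv.1 contDiff_massProfile).2

lemma deriv_massProfile_nonneg (x : ℝ) : 0 ≤ deriv massProfile x :=
  monotone_massProfile.deriv_nonneg

lemma deriv_massProfile_of_le_half {x : ℝ} (hx : x ≤ 1 / 2) : deriv massProfile x = 1 := by
  rw [deriv_eq_of_eqOn (uniqueDiffOn_Iic (1 / 2) x hx) hx (differentiable_massProfile x)
    differentiableAt_id fun y hy => massProfile_of_le_half hy]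
  exact deriv_id x

lemma deriv_massProfile_of_one_le {x : ℝ} (hx : 1 ≤ x) : deriv massProfile x = 0 := by
  rw [deriv_eq_of_eqOn (uniqueDiffOn_Ici 1 x hx) hx (differentiable_massProfile x)
    (differentiableAt_const 1) fun y hy => massProfile_of_one_le hy]
  exact deriv_const x 1

/-! ### The Laplacian -/

lemma lap_eq_laplacian (f : ℂ → ℝ) : lap f = Laplacian.laplacian f := by
  rw [InnerProductSpace.laplacian_eq_iteratedFDeriv_complexPlane]
  rfl

lemma lap_eq_fderiv (f : ℂ → ℝ) (z : ℂ) :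
    lap f z = fderiv ℝ (fderiv ℝ f) z 1 1 + fderiv ℝ (fderiv ℝ f) z Complex.I Complex.I := by
  simp [lap, iteratedFDeriv_two_apply]

lemma lap_add {f g : ℂ → ℝ} {z : ℂ} (hf : ContDiffAt ℝ 2 f z) (hg : ContDiffAt ℝ 2 g z) :
    lap (f + g) z = lap f z + lap g z := by
  simpa only [lap_eq_laplacian] using hf.laplacian_add hg

lemma lap_sub {f g : ℂ → ℝ} {z : ℂ} (hf : ContDiffAt ℝ 2 f z) (hg : ContDiffAt ℝ 2 g z) :
    lap (f - g) z = lap f z - lap g z := by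
  simpa only [lap_eq_laplacian] using hf.laplacian_sub hg

lemma lap_const_mul {f : ℂ → ℝ} {z : ℂ} (c : ℝ) (hf : ContDiffAt ℝ 2 f z) :
    lap (fun w => c * f w) z = c * lap f z := by
  rw [lap_eq_laplacian, lap_eq_laplacian]
  exact InnerProductSpace.laplacian_smul c hf

lemma lap_add_const {f : ℂ → ℝ} {z : ℂ} (c : ℝ) (hf : ContDiffAt ℝ 2 f z) :
    lap (fun w => f w + c) z = lap f z := by
  rw [show (fun w => f w + c) = f + fun _ => c from rfl, lap_add hf contDiffAt_const,
    lap_eq_laplacian fun _ => c, InnerProductSpace.laplacian_const]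
  exact add_zero _

lemma lap_comp_sub (f : ℂ → ℝ) (ζ z : ℂ) : lap (fun w => f (w - ζ)) z = lap f (z - ζ) := by
  simp only [lap, iteratedFDeriv_comp_sub]

lemma lap_comp_const_smul {f : ℂ → ℝ} (hf : ContDiff ℝ 2 f) (c : ℝ) (z : ℂ) :
    lap (fun w => f (c • w)) z = c ^ 2 * lap f (c • z) := by
  simp only [lap, iteratedFDeriv_comp_const_smul c hf, smul_apply,
    smul_eq_mul, mul_add]

lemma lap_comp_const_sub {f : ℂ → ℝ} (hf : ContDiff ℝ 2 f) (z ζ : ℂ) :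
    lap (fun w => f (z - w)) ζ = lap f (z - ζ) := by
  have h : (fun w => f (z - w)) = fun w => (fun u => f ((-1 : ℝ) • u)) (w - z) := by
    funext w
    simp
  rw [h, lap_comp_sub fun u => f ((-1 : ℝ) • u), lap_comp_const_smul hf]
  simp

lemma hasFDerivAt_comp_norm_sq {g : ℝ → ℝ} (hg : Differentiable ℝ g) (w : ℂ) :
    HasFDerivAt (fun z : ℂ => g (‖z‖ ^ 2)) ((2 * deriv g (‖w‖ ^ 2)) • innerSL ℝ w) w := by
  have h := (hg (‖w‖ ^ 2)).hasDerivAt.comp_hasFDerivAt w (hasFDerivAt_id (𝕜 := ℝ) w).norm_sq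
  convert! h using 1
  ext v
  simp only [smul_apply, coe_innerSL_apply, smul_eq_mul, id_eq, ContinuousLinearMap.comp_id,
    nsmul_eq_mul, Nat.cast_ofNat]
  ring

lemma lap_comp_norm_sq {g : ℝ → ℝ} (hg : ContDiff ℝ 2 g) (w : ℂ) :
    lap (fun z => g (‖z‖ ^ 2)) w = 4 * deriv (fun x => x * deriv g x) (‖w‖ ^ 2) := by
  have hdg : Differentiable ℝ (deriv g) :=
    (contDiff_succ_iff_deriv (n := 1).1 hg).2.2.differentiable one_ne_zero
  have hgrad : fderiv ℝ (fun z : ℂ => g (‖z‖ ^ 2)) =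
      fun w => (2 * deriv g (‖w‖ ^ 2)) • innerSL ℝ w :=
    funext fun w => (hasFDerivAt_comp_norm_sq (hg.differentiable two_ne_zero) w).fderiv
  have hinner (u v : ℂ) :
      (innerSL ℝ : ℂ →L[ℝ] ℂ →L[ℝ] ℝ) u v = u.re * v.re + u.im * v.im := by
    rw [innerSL_apply_apply, Complex.inner, Complex.mul_re, Complex.conj_re, Complex.conj_im]
    ring
  have hhess := ((hasFDerivAt_comp_norm_sq hdg w).const_mul 2).fun_smul
    (innerSL ℝ : ℂ →L[ℝ] ℂ →L[ℝ] ℝ).hasFDerivAt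
  rw [lap_eq_fderiv, hgrad, hhess.fderiv,
    deriv_fun_mul differentiableAt_fun_id (hdg _), Complex.sq_norm, Complex.normSq_apply]
  simp only [add_apply, smul_apply, ContinuousLinearMap.smulRight_apply, hinner, Complex.one_re,
    Complex.one_im, Complex.I_re, Complex.I_im, smul_eq_mul, deriv_id'']
  ring

/-! ### Mollifiers and their logarithmic potentials -/

/-- The radial mollifier at unit scale: a smooth probability density on the closed unit disk. -/
def unitMollifier (w : ℂ) : ℝ := π⁻¹ * deriv massProfile (‖w‖ ^ 2)

/-- The logarithmic potential of `unitMollifier`: smooth, and equal to `(2π)⁻¹ log ‖w‖` outside the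
unit disk. -/
def unitPotential (w : ℂ) : ℝ := (4 * π)⁻¹ * smoothLog (‖w‖ ^ 2)

/-- The mollifier at scale `t`: a smooth probability density on the closed disk of radius `t`. -/
def mollifier (t : ℝ) (w : ℂ) : ℝ := (t ^ 2)⁻¹ * unitMollifier (t⁻¹ • w)

/-- The logarithmic potential of `mollifier t`: smooth, and equal to `(2π)⁻¹ log ‖w‖` for
`t ≤ ‖w‖`. -/
def logPotential (t : ℝ) (w : ℂ) : ℝ := unitPotential (t⁻¹ • w) + (2 * π)⁻¹ * Real.log t

lemma contDiff_unitMollifier : ContDiff ℝ (⊤ : ℕ∞) unitMollifier :=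
  contDiff_const.mul (contDiff_deriv_massProfile.comp (contDiff_norm_sq ℝ))

lemma contDiff_unitPotential : ContDiff ℝ (⊤ : ℕ∞) unitPotential :=
  contDiff_const.mul (contDiff_smoothLog.comp (contDiff_norm_sq ℝ))

lemma unitMollifier_nonneg (w : ℂ) : 0 ≤ unitMollifier w :=
  mul_nonneg (by positivity) (deriv_massProfile_nonneg _)

lemma unitMollifier_of_one_le {w : ℂ} (hw : 1 ≤ ‖w‖) : unitMollifier w = 0 := by
  rw [unitMollifier, deriv_massProfile_of_one_le (one_le_pow₀ hw), mul_zero]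

lemma unitMollifier_of_le_half {w : ℂ} (hw : ‖w‖ ≤ 1 / 2) : unitMollifier w = π⁻¹ := by
  rw [unitMollifier, deriv_massProfile_of_le_half, mul_one]
  calc ‖w‖ ^ 2 ≤ (1 / 2) ^ 2 := by gcongr
    _ ≤ 1 / 2 := by norm_num

lemma unitPotential_of_one_le {w : ℂ} (hw : 1 ≤ ‖w‖) :
    unitPotential w = (2 * π)⁻¹ * Real.log ‖w‖ := by
  rw [unitPotential, smoothLog_of_one_le (one_le_pow₀ hw), Real.log_pow]
  push_cast
  field_simp
  ring

lemma abs_unitPotential_le_one {w : ℂ} (hw : ‖w‖ ≤ 1) : |unitPotential w| ≤ 1 := by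
  have h : |smoothLog (‖w‖ ^ 2)| ≤ 2 :=
    abs_smoothLog_le_two (by positivity) (pow_le_one₀ (norm_nonneg w) hw)
  rw [unitPotential, abs_mul, abs_of_pos (by positivity), inv_mul_le_one₀ (by positivity)]
  linarith [Real.pi_gt_three]

lemma lap_unitPotential (w : ℂ) : lap unitPotential w = unitMollifier w := by
  have hsmooth : ContDiff ℝ 2 smoothLog := contDiff_infty.1 contDiff_smoothLog 2
  have h : lap unitPotential w = (4 * π)⁻¹ * lap (fun z => smoothLog (‖z‖ ^ 2)) w :=
    lap_const_mul _ (hsmooth.comp (contDiff_norm_sq ℝ)).contDiffAt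
  rw [h, lap_comp_norm_sq hsmooth, deriv_smoothLog]
  change _ * (4 * deriv massProfile _) = _
  rw [unitMollifier]
  field_simp

lemma integral_mul_deriv_massProfile_sq :
    ∫ r in Ioi (0 : ℝ), 2 * r * deriv massProfile (r ^ 2) = 1 := by
  have hderiv : ∀ r ∈ Ici (0 : ℝ), HasDerivAt (fun r => massProfile (r ^ 2))
      (2 * r * deriv massProfile (r ^ 2)) r := fun r _ => by
    have h := (differentiable_massProfile (r ^ 2)).hasDerivAt.comp r (hasDerivAt_pow 2 r)
    convert! h using 1
    ring
  have htendsto : Tendsto (fun r : ℝ => massProfile (r ^ 2)) atTop (𝓝 1) :=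
    tendsto_const_nhds.congr' <| (eventually_ge_atTop 1).mono fun r hr =>
      (massProfile_of_one_le (one_le_pow₀ hr)).symm
  rw [integral_Ioi_of_hasDerivAt_of_nonneg' hderiv (fun r hr => ?_) htendsto]
  · simp [massProfile]
  · have := mem_Ioi.1 hr
    exact mul_nonneg (by positivity) (deriv_massProfile_nonneg _)

lemma integral_unitMollifier : ∫ w, unitMollifier w = 1 := by
  have hpolar := integral_fun_norm_addHaar (E := ℂ) volume
    fun r => π⁻¹ * deriv massProfile (r ^ 2)
  have hvol : (volume : Measure ℂ).real (ball 0 1) = π := by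
    simp [Measure.real, Complex.volume_ball]
  rw [hvol, Complex.finrank_real_complex] at hpolar
  calc ∫ w, unitMollifier w
      = 2 • π • ∫ r in Ioi (0 : ℝ), r ^ (2 - 1) • (π⁻¹ * deriv massProfile (r ^ 2)) := hpolar
    _ = ∫ r in Ioi (0 : ℝ), 2 * r * deriv massProfile (r ^ 2) := by
      simp only [nsmul_eq_mul, smul_eq_mul, ← integral_const_mul]
      refine integral_congr_ae (ae_of_all _ fun r => ?_)
      push_cast
      field_simp
    _ = 1 := integral_mul_deriv_massProfile_sq

lemma exists_forall_unitMollifier_le :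
    ∃ B : ℝ, (∀ w, unitMollifier w ≤ B) ∧ ∀ w, ‖fderiv ℝ unitMollifier w‖ ≤ B := by
  have hsupp : HasCompactSupport unitMollifier :=
    HasCompactSupport.intro (isCompact_closedBall 0 1) fun w hw =>
      unitMollifier_of_one_le <| by simpa using (not_le.1 (mem_closedBall.not.1 hw)).le
  obtain ⟨B₀, hB₀⟩ := contDiff_unitMollifier.continuous.bounded_above_of_compact_support hsupp
  obtain ⟨B₁, hB₁⟩ := (contDiff_unitMollifier.continuous_fderiv
    (by simp)).bounded_above_of_compact_support (hsupp.fderiv ℝ)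
  exact ⟨max B₀ B₁, fun w => (le_abs_self _).trans ((hB₀ w).trans (le_max_left _ _)),
    fun w => (hB₁ w).trans (le_max_right _ _)⟩

lemma mollifier_nonneg (t : ℝ) (w : ℂ) : 0 ≤ mollifier t w :=
  mul_nonneg (by positivity) (unitMollifier_nonneg _)

lemma integral_mollifier {t : ℝ} (ht : t ≠ 0) : ∫ w, mollifier t w = 1 := by
  simp only [mollifier, integral_const_mul, Measure.integral_comp_smul volume unitMollifier,
    Complex.finrank_real_complex, integral_unitMollifier, inv_pow, inv_inv, smul_eq_mul, mul_one]
  rw [abs_of_pos (by positivity), inv_mul_cancel₀ (by positivity)]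

section Scale

variable {t : ℝ} {w : ℂ}

lemma norm_inv_smul (ht : 0 < t) (w : ℂ) : ‖t⁻¹ • w‖ = t⁻¹ * ‖w‖ := by
  rw [norm_smul, Real.norm_of_nonneg (by positivity)]

lemma mollifier_of_le_norm (ht : 0 < t) (hw : t ≤ ‖w‖) : mollifier t w = 0 := by
  rw [mollifier, unitMollifier_of_one_le, mul_zero]
  rwa [norm_inv_smul ht, le_inv_mul_iff₀ ht, mul_one]

lemma mollifier_of_norm_le_half (ht : 0 < t) (hw : ‖w‖ ≤ t / 2) :
    mollifier t w = (t ^ 2)⁻¹ * π⁻¹ := by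
  rw [mollifier, unitMollifier_of_le_half]
  rw [norm_inv_smul ht, inv_mul_le_iff₀ ht]
  linarith

lemma logPotential_of_le_norm (ht : 0 < t) (hw : t ≤ ‖w‖) :
    logPotential t w = (2 * π)⁻¹ * Real.log ‖w‖ := by
  have hw0 : 0 < ‖w‖ := ht.trans_le hw
  rw [logPotential, unitPotential_of_one_le, norm_inv_smul ht, Real.log_mul (by positivity)
    hw0.ne', Real.log_inv]
  · ring
  · rwa [norm_inv_smul ht, le_inv_mul_iff₀ ht, mul_one]

lemma abs_logPotential_sub_log_max_le_one (ht : 0 < t) (w : ℂ) :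
    |logPotential t w - (2 * π)⁻¹ * Real.log (max ‖w‖ t)| ≤ 1 := by
  rcases le_total t ‖w‖ with hw | hw
  · simp [max_eq_left hw, logPotential_of_le_norm ht hw]
  · rw [max_eq_right hw, logPotential, add_sub_cancel_right]
    refine abs_unitPotential_le_one ?_
    rwa [norm_inv_smul ht, inv_mul_le_iff₀ ht, mul_one]

lemma lap_logPotential (t : ℝ) (w : ℂ) : lap (logPotential t) w = mollifier t w := by
  have hsmooth : ContDiff ℝ 2 unitPotential := contDiff_infty.1 contDiff_unitPotential 2
  have hscaled : ContDiffAt ℝ 2 (fun w => unitPotential (t⁻¹ • w)) w :=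
    (hsmooth.comp (contDiff_const_smul _)).contDiffAt
  calc lap (logPotential t) w = lap (fun w => unitPotential (t⁻¹ • w)) w :=
        lap_add_const _ hscaled
    _ = mollifier t w := by
      rw [lap_comp_const_smul hsmooth, lap_unitPotential, inv_pow, mollifier]

lemma contDiffAt_mollifier (ht : t ≠ 0) :
    ContDiffAt ℝ (⊤ : ℕ∞) (fun x : ℝ × ℂ => mollifier x.1 x.2) (t, w) :=
  ((contDiffAt_fst.pow 2).inv (pow_ne_zero 2 ht)).mul <|
    contDiff_unitMollifier.contDiffAt.comp _ ((contDiffAt_fst.inv ht).smul contDiffAt_snd)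

lemma contDiffAt_logPotential (ht : t ≠ 0) :
    ContDiffAt ℝ (⊤ : ℕ∞) (fun x : ℝ × ℂ => logPotential x.1 x.2) (t, w) :=
  (contDiff_unitPotential.contDiffAt.comp _ ((contDiffAt_fst.inv ht).smul contDiffAt_snd)).add <|
    contDiffAt_const.mul (contDiffAt_fst.log ht)

lemma contDiff_mollifier (t : ℝ) : ContDiff ℝ (⊤ : ℕ∞) (mollifier t) :=
  contDiff_const.mul (contDiff_unitMollifier.comp (contDiff_const_smul _))

lemma contDiff_logPotential (t : ℝ) : ContDiff ℝ (⊤ : ℕ∞) (logPotential t) :=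
  (contDiff_unitPotential.comp (contDiff_const_smul _)).add contDiff_const

end Scale

lemma exists_forall_mollifier_le : ∃ B : ℝ, ∀ t : ℝ, 0 < t → ∀ w : ℂ,
    mollifier t w ≤ B / t ^ 2 ∧ ‖fderiv ℝ (mollifier t) w‖ ≤ B / t ^ 3 := by
  obtain ⟨B, hB, hB'⟩ := exists_forall_unitMollifier_le
  refine ⟨B, fun t ht w => ⟨?_, ?_⟩⟩
  · rw [mollifier, div_eq_inv_mul]
    gcongr
    exact hB _
  · have hdiff : DifferentiableAt ℝ (fun w => unitMollifier (t⁻¹ • w)) w :=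
      (contDiff_unitMollifier.comp (contDiff_const_smul _)).differentiable (by simp) w
    have hfderiv : fderiv ℝ (mollifier t) w =
        (t ^ 2)⁻¹ • t⁻¹ • fderiv ℝ unitMollifier (t⁻¹ • w) := by
      rw [← fderiv_comp_smul]
      exact fderiv_const_mul hdiff _
    calc ‖fderiv ℝ (mollifier t) w‖ = (t ^ 3)⁻¹ * ‖fderiv ℝ unitMollifier (t⁻¹ • w)‖ := by
          rw [hfderiv, norm_smul, norm_smul, Real.norm_of_nonneg (by positivity),
            Real.norm_of_nonneg (by positivity)]
          field_simp
      _ ≤ (t ^ 3)⁻¹ * B := by gcongr; exact hB' _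
      _ = B / t ^ 3 := (div_eq_inv_mul _ _).symm

/-! ### Differentiation under the integral sign -/

/-- The family `k x : E → F`, indexed by `x : X`, vanishes for `x` outside a compact set which can
be chosen locally uniformly in the argument `z : E`. -/
def LocallyCompactlyIndexed {X E F : Type*} [TopologicalSpace X] [TopologicalSpace E] [Zero F]
    (k : X → E → F) : Prop :=
  ∀ z₀, ∃ K, IsCompact K ∧ ∀ᶠ z in 𝓝 z₀, ∀ x ∉ K, k x z = 0

lemma LocallyCompactlyIndexed.of_lipschitzWith {E F : Type*} [NormedAddCommGroup E]
    [ProperSpace E] [Zero F] {k : E → E → F} {t : E → ℝ} {L : ℝ≥0}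
    (ht : LipschitzWith L t) (hL : L < 1) (hk : ∀ ζ z, t ζ ≤ ‖z - ζ‖ → k ζ z = 0) :
    LocallyCompactlyIndexed k := by
  intro z₀
  set R := (t z₀ + 1) / (1 - L)
  refine ⟨closedBall z₀ R, isCompact_closedBall z₀ R, ?_⟩
  filter_upwards [ball_mem_nhds z₀ one_pos] with z hz ζ hζ
  refine hk ζ z ?_
  have hL' : 0 < 1 - (L : ℝ) := sub_pos.2 (mod_cast hL)
  have hlip : t ζ - t z₀ ≤ L * dist ζ z₀ := (le_abs_self _).trans (ht.dist_le_mul ζ z₀)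
  have hfar : t z₀ + 1 < dist ζ z₀ * (1 - L) :=
    (div_lt_iff₀ hL').1 (not_le.1 (mem_closedBall.not.1 hζ))
  have hnear : dist z z₀ < 1 := mem_ball.1 hz
  have htri := dist_triangle_left ζ z₀ z
  rw [← dist_eq_norm]
  linarith

section ParametricIntegral

universe u

variable {X P : Type*} {E F : Type u} [TopologicalSpace X] [NormedAddCommGroup P] [NormedSpace ℝ P]
  [NormedAddCommGroup E] [NormedSpace ℝ E] [NormedAddCommGroup F] [NormedSpace ℝ F]

lemma LocallyCompactlyIndexed.fderiv {k : X → E → F} (hk : LocallyCompactlyIndexed k) :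
    LocallyCompactlyIndexed fun x => fderiv ℝ (k x) := by
  intro z₀
  obtain ⟨K, hK, hzero⟩ := hk z₀
  refine ⟨K, hK, hzero.eventually_nhds.mono fun z hz x hx => ?_⟩
  have hx0 : k x =ᶠ[𝓝 z] fun _ => 0 := hz.mono fun w hw => hw x hx
  exact hx0.fderiv_eq.trans (by rw [fderiv_fun_const, Pi.zero_apply])

lemma contDiffAt_uncurry_fderiv {f : P → E → F} {c : P} {z : E}
    (hf : ContDiffAt ℝ (⊤ : ℕ∞) (Function.uncurry f) (c, z)) :
    ContDiffAt ℝ (⊤ : ℕ∞) (Function.uncurry fun c => fderiv ℝ (f c)) (c, z) :=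
  ContDiffAt.fderiv (f := fun y : P × E => f y.1) (g := Prod.snd)
    (hf.comp ((c, z), z) ((contDiffAt_fst.comp _ contDiffAt_fst).prodMk contDiffAt_snd))
    contDiffAt_snd (by simp)

lemma contDiffAt_section {f : P → E → F} {c : P} {z : E}
    (hf : ContDiffAt ℝ (⊤ : ℕ∞) (Function.uncurry f) (c, z)) :
    ContDiffAt ℝ (⊤ : ℕ∞) (f c) z :=
  hf.comp z (contDiffAt_const.prodMk contDiffAt_id)

section Continuity

variable {p : X → P} {f : P → E → F} (hp : Continuous p)
  (hf : ∀ x z, ContDiffAt ℝ (⊤ : ℕ∞) (Function.uncurry f) (p x, z))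

include hp hf

lemma continuous_uncurry_kernel : Continuous fun y : E × X => f (p y.2) y.1 :=
  continuous_iff_continuousAt.2 fun y =>
    ContinuousAt.comp (f := fun y : E × X => (p y.2, y.1)) (hf y.2 y.1).continuousAt
      ((hp.comp continuous_snd).prodMk continuous_fst).continuousAt

variable [MeasurableSpace X] [OpensMeasurableSpace X] [T2Space X] {μ : Measure X}
  [IsFiniteMeasureOnCompacts μ]

lemma integrable_kernel (hk : LocallyCompactlyIndexed fun x => f (p x)) (z : E) :
    Integrable (fun x => f (p x) z) μ := by
  obtain ⟨K, hK, hzero⟩ := hk z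
  exact ((continuous_uncurry_kernel hp hf).comp
    (continuous_const.prodMk continuous_id)).integrable_of_hasCompactSupport
      (HasCompactSupport.intro hK hzero.self_of_nhds)

variable [WeaklyLocallyCompactSpace E]

lemma hasFDerivAt_integral_kernel (hk : LocallyCompactlyIndexed fun x => f (p x)) (z₀ : E) :
    HasFDerivAt (fun z => ∫ x, f (p x) z ∂μ) (∫ x, fderiv ℝ (f (p x)) z₀ ∂μ) z₀ := by
  have hf' := fun x z => contDiffAt_uncurry_fderiv (hf x z)
  obtain ⟨K, hK, hzero⟩ := hk.fderiv z₀
  obtain ⟨S, hS, hSz₀⟩ := exists_compact_mem_nhds z₀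
  obtain ⟨M, hM⟩ := (hS.prod hK).exists_bound_of_continuousOn
    (continuous_uncurry_kernel hp hf').continuousOn
  refine hasFDerivAt_integral_of_dominated_of_fderiv_le (F' := fun z x => fderiv ℝ (f (p x)) z)
    (bound := K.indicator fun _ => M) (inter_mem hSz₀ hzero)
    (Eventually.of_forall fun z => (integrable_kernel hp hf hk z).aestronglyMeasurable)
    (integrable_kernel hp hf hk z₀)
    (integrable_kernel hp hf' hk.fderiv z₀).aestronglyMeasurable
    (ae_of_all _ fun x z hz => ?_)
    ((integrableOn_const hK.measure_lt_top.ne).integrable_indicator hK.measurableSet)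
    (ae_of_all _ fun x z _ =>
      ((contDiffAt_section (hf x z)).differentiableAt (by simp)).hasFDerivAt)
  by_cases hx : x ∈ K
  · simpa only [indicator_of_mem hx] using hM (z, x) ⟨hz.1, hx⟩
  · rw [indicator_of_notMem hx, norm_le_zero_iff]
    exact hz.2 x hx

omit hf in
lemma contDiff_nat_integral_kernel (n : ℕ) : ∀ {F : Type u} [NormedAddCommGroup F]
    [NormedSpace ℝ F] {f : P → E → F}
    (_ : ∀ x z, ContDiffAt ℝ (⊤ : ℕ∞) (Function.uncurry f) (p x, z))
    (_ : LocallyCompactlyIndexed fun x => f (p x)), ContDiff ℝ n fun z => ∫ x, f (p x) z ∂μ := by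
  induction n with
  | zero =>
    intro F _ _ f hf hk
    exact contDiff_zero.2 <| continuous_iff_continuousAt.2 fun z =>
      (hasFDerivAt_integral_kernel hp hf hk z).continuousAt
  | succ n ih =>
    intro F _ _ f hf hk
    exact contDiff_succ_iff_hasFDerivAt.2 ⟨_, ih
      (fun x z => contDiffAt_uncurry_fderiv (hf x z)) hk.fderiv,
      hasFDerivAt_integral_kernel hp hf hk⟩

lemma contDiff_integral_kernel (hk : LocallyCompactlyIndexed fun x => f (p x)) :
    ContDiff ℝ (⊤ : ℕ∞) fun z => ∫ x, f (p x) z ∂μ :=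
  contDiff_infty.2 fun n => contDiff_nat_integral_kernel hp n hf hk

end Continuity

lemma lap_integral_kernel [MeasurableSpace X] [OpensMeasurableSpace X] [T2Space X] {μ : Measure X}
    [IsFiniteMeasureOnCompacts μ] {p : X → P} {f : P → ℂ → ℝ} (hp : Continuous p)
    (hf : ∀ x z, ContDiffAt ℝ (⊤ : ℕ∞) (Function.uncurry f) (p x, z))
    (hk : LocallyCompactlyIndexed fun x => f (p x)) (z : ℂ) :
    lap (fun z => ∫ x, f (p x) z ∂μ) z = ∫ x, lap (f (p x)) z ∂μ := by
  have hf' := fun x z => contDiffAt_uncurry_fderiv (hf x z)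
  have hf'' := fun x z => contDiffAt_uncurry_fderiv (hf' x z)
  have hgrad : fderiv ℝ (fun z => ∫ x, f (p x) z ∂μ) = fun z => ∫ x, fderiv ℝ (f (p x)) z ∂μ :=
    funext fun z => (hasFDerivAt_integral_kernel hp hf hk z).fderiv
  have hint := integrable_kernel (μ := μ) hp hf'' hk.fderiv.fderiv z
  have hint' (v : ℂ) := hint.apply_continuousLinearMap v
  rw [lap_eq_fderiv, hgrad, (hasFDerivAt_integral_kernel hp hf' hk.fderiv z).fderiv]
  simp only [ContinuousLinearMap.integral_apply hint, ContinuousLinearMap.integral_apply (hint' _),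
    lap_eq_fderiv]
  exact (integral_add ((hint' 1).apply_continuousLinearMap 1)
    ((hint' Complex.I).apply_continuousLinearMap Complex.I)).symm

end ParametricIntegral

/-! ### Smearing out a measure at a variable scale -/

/-- The density obtained from `μ` by replacing each point mass `δ_ζ` with a smooth radial density
supported in the disk of radius `t ζ` about `ζ`. -/
def smearedDensity (μ : Measure ℂ) (t : ℂ → ℝ) (z : ℂ) : ℝ := ∫ ζ, mollifier (t ζ) (z - ζ) ∂μ

/-- A function with Laplacian `smearedDensity μ t`, given `φ` with Laplacian `μ`: the mollification
of `φ` at scale `1`, corrected by the potential of the difference between the two smearings of `μ`,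
at the scale `t` and at the scale `1`. -/
def regularisedPotential (φ : ℂ → ℝ) (μ : Measure ℂ) (t : ℂ → ℝ) (z : ℂ) : ℝ :=
  (∫ ζ, φ ζ * mollifier 1 (z - ζ)) + ∫ ζ, (logPotential (t ζ) (z - ζ) - logPotential 1 (z - ζ)) ∂μ

lemma logPotential_sub_eq_zero {s t : ℝ} (hs : 0 < s) (ht : 0 < t) {w : ℂ} (hw : max s t ≤ ‖w‖) :
    logPotential s w - logPotential t w = 0 := by
  rw [logPotential_of_le_norm hs ((le_max_left s t).trans hw),
    logPotential_of_le_norm ht ((le_max_right s t).trans hw), sub_self]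

lemma hasCompactSupport_logPotential_sub {s t : ℝ} (hs : 0 < s) (ht : 0 < t) (z : ℂ) :
    HasCompactSupport fun ζ => logPotential s (z - ζ) - logPotential t (z - ζ) :=
  HasCompactSupport.intro (isCompact_closedBall z (max s t)) fun ζ hζ =>
    logPotential_sub_eq_zero hs ht <| by
      rw [← dist_eq_norm']
      exact (not_le.1 (mem_closedBall.not.1 hζ)).le

lemma hasCompactSupport_mollifier_const_sub {t : ℝ} (ht : 0 < t) (z : ℂ) :
    HasCompactSupport fun ζ => mollifier t (z - ζ) :=
  HasCompactSupport.intro (isCompact_closedBall z t) fun ζ hζ =>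
    mollifier_of_le_norm ht <| by
      rw [← dist_eq_norm']
      exact (not_le.1 (mem_closedBall.not.1 hζ)).le

lemma contDiffAt_mollifier_sub {c : ℝ × ℂ} (hc : c.1 ≠ 0) (z : ℂ) :
    ContDiffAt ℝ (⊤ : ℕ∞) (Function.uncurry fun (c : ℝ × ℂ) z => mollifier c.1 (z - c.2)) (c, z) :=
  (contDiffAt_mollifier hc).comp (c, z) <|
    contDiffAt_fst.fst.prodMk (contDiffAt_snd.sub contDiffAt_fst.snd)

lemma contDiffAt_logPotential_sub {c : ℝ × ℂ} (hc : c.1 ≠ 0) (z : ℂ) :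
    ContDiffAt ℝ (⊤ : ℕ∞) (Function.uncurry fun (c : ℝ × ℂ) z =>
      logPotential c.1 (z - c.2) - logPotential 1 (z - c.2)) (c, z) := by
  have hsub : ContDiffAt ℝ (⊤ : ℕ∞) (fun y : (ℝ × ℂ) × ℂ => y.2 - y.1.2) (c, z) :=
    contDiffAt_snd.sub contDiffAt_fst.snd
  have hvar := (contDiffAt_logPotential (w := z - c.2) hc).comp (c, z)
    (contDiffAt_fst.fst.prodMk hsub)
  have hone := (contDiff_logPotential 1).contDiffAt.comp (c, z) hsub
  exact hvar.sub hone

section Density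

variable {μ : Measure ℂ} [IsFiniteMeasureOnCompacts μ] {t : ℂ → ℝ} {L : ℝ≥0}
  (ht₀ : ∀ ζ, 0 < t ζ) (ht : LipschitzWith L t) (hL : L < 1)

include ht₀ ht hL

lemma locallyCompactlyIndexed_mollifier :
    LocallyCompactlyIndexed fun ζ z => mollifier (t ζ) (z - ζ) :=
  .of_lipschitzWith ht hL fun ζ _ h => mollifier_of_le_norm (ht₀ ζ) h

lemma integrable_mollifier (z : ℂ) : Integrable (fun ζ => mollifier (t ζ) (z - ζ)) μ :=
  integrable_kernel (p := fun ζ => (t ζ, ζ)) (ht.continuous.prodMk continuous_id)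
    (fun ζ z => contDiffAt_mollifier_sub (ht₀ ζ).ne' z)
    (locallyCompactlyIndexed_mollifier ht₀ ht hL) z

lemma contDiff_smearedDensity : ContDiff ℝ (⊤ : ℕ∞) (smearedDensity μ t) :=
  contDiff_integral_kernel (p := fun ζ => (t ζ, ζ)) (ht.continuous.prodMk continuous_id)
    (fun ζ z => contDiffAt_mollifier_sub (ht₀ ζ).ne' z)
    (locallyCompactlyIndexed_mollifier ht₀ ht hL)

lemma fderiv_smearedDensity (z : ℂ) :
    fderiv ℝ (smearedDensity μ t) z = ∫ ζ, fderiv ℝ (mollifier (t ζ)) (z - ζ) ∂μ := by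
  have h := hasFDerivAt_integral_kernel (μ := μ)
    (p := fun ζ => (t ζ, ζ)) (ht.continuous.prodMk continuous_id)
    (fun ζ z => contDiffAt_mollifier_sub (ht₀ ζ).ne' z)
    (locallyCompactlyIndexed_mollifier ht₀ ht hL) z
  exact h.fderiv.trans (by simp only [fderiv_comp_sub])

lemma locallyCompactlyIndexed_logPotential_sub :
    LocallyCompactlyIndexed fun ζ z => logPotential (t ζ) (z - ζ) - logPotential 1 (z - ζ) :=
  .of_lipschitzWith (ht.max_const 1) hL fun ζ _ h => logPotential_sub_eq_zero (ht₀ ζ) one_pos h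

lemma integrable_logPotential_sub (z : ℂ) :
    Integrable (fun ζ => logPotential (t ζ) (z - ζ) - logPotential 1 (z - ζ)) μ :=
  integrable_kernel (p := fun ζ => (t ζ, ζ)) (ht.continuous.prodMk continuous_id)
    (fun ζ z => contDiffAt_logPotential_sub (ht₀ ζ).ne' z)
    (locallyCompactlyIndexed_logPotential_sub ht₀ ht hL) z

lemma contDiff_integral_logPotential_sub :
    ContDiff ℝ (⊤ : ℕ∞) fun z =>
      ∫ ζ, (logPotential (t ζ) (z - ζ) - logPotential 1 (z - ζ)) ∂μ :=
  contDiff_integral_kernel (p := fun ζ => (t ζ, ζ)) (ht.continuous.prodMk continuous_id)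
    (fun ζ z => contDiffAt_logPotential_sub (ht₀ ζ).ne' z)
    (locallyCompactlyIndexed_logPotential_sub ht₀ ht hL)

lemma lap_integral_logPotential_sub (z : ℂ) :
    lap (fun z => ∫ ζ, (logPotential (t ζ) (z - ζ) - logPotential 1 (z - ζ)) ∂μ) z =
      smearedDensity μ t z - smearedDensity μ (fun _ => 1) z := by
  have hsmooth (s : ℝ) (z : ℂ) : ContDiffAt ℝ 2 (logPotential s) z :=
    (contDiff_infty.1 (contDiff_logPotential s) 2).contDiffAt
  have hlap (ζ : ℂ) : lap (fun z => logPotential (t ζ) (z - ζ) - logPotential 1 (z - ζ)) z =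
      mollifier (t ζ) (z - ζ) - mollifier 1 (z - ζ) := by
    rw [lap_comp_sub fun w => logPotential (t ζ) w - logPotential 1 w, ← lap_logPotential,
      ← lap_logPotential]
    exact lap_sub (hsmooth _ _) (hsmooth _ _)
  have h := lap_integral_kernel (μ := μ)
    (p := fun ζ => (t ζ, ζ)) (ht.continuous.prodMk continuous_id)
    (fun ζ z => contDiffAt_logPotential_sub (ht₀ ζ).ne' z)
    (locallyCompactlyIndexed_logPotential_sub ht₀ ht hL) z
  simp only [hlap] at h
  rw [h, integral_sub (integrable_mollifier ht₀ ht hL z)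
    (integrable_mollifier (fun _ => one_pos) (LipschitzWith.const 1) one_pos z)]
  rfl

end Density

section Potential

lemma contDiffAt_mul_mollifier (c : ℝ × ℂ) (z : ℂ) :
    ContDiffAt ℝ (⊤ : ℕ∞)
      (Function.uncurry fun (c : ℝ × ℂ) z => c.1 * mollifier 1 (z - c.2)) (c, z) :=
  contDiffAt_fst.fst.mul <| (contDiff_mollifier 1).contDiffAt.comp (c, z) <|
    contDiffAt_snd.sub contDiffAt_fst.snd

lemma locallyCompactlyIndexed_mul_mollifier (φ : ℂ → ℝ) :
    LocallyCompactlyIndexed fun ζ z => φ ζ * mollifier 1 (z - ζ) :=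
  .of_lipschitzWith (LipschitzWith.const 1) one_pos fun ζ _ h => by
    rw [mollifier_of_le_norm one_pos h, mul_zero]

variable {φ : ℂ → ℝ} (hφ : Continuous φ)

include hφ

lemma contDiff_integral_mul_mollifier :
    ContDiff ℝ (⊤ : ℕ∞) fun z => ∫ ζ, φ ζ * mollifier 1 (z - ζ) :=
  contDiff_integral_kernel (p := fun ζ => (φ ζ, ζ)) (hφ.prodMk continuous_id)
    (fun _ z => contDiffAt_mul_mollifier _ z) (locallyCompactlyIndexed_mul_mollifier φ)

variable {μ : Measure ℂ}
  (hlap : ∀ v : ℂ → ℝ, ContDiff ℝ (⊤ : ℕ∞) v → HasCompactSupport v →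
    ∫ z, φ z * lap v z = ∫ z, v z ∂μ)

include hlap

lemma lap_integral_mul_mollifier (z : ℂ) :
    lap (fun z => ∫ ζ, φ ζ * mollifier 1 (z - ζ)) z = smearedDensity μ (fun _ => 1) z := by
  have hsmooth : ContDiff ℝ 2 (mollifier 1) := contDiff_infty.1 (contDiff_mollifier 1) 2
  have hlap' (ζ : ℂ) : lap (fun z => φ ζ * mollifier 1 (z - ζ)) z =
      φ ζ * lap (fun w => mollifier 1 (z - w)) ζ := by
    have htranslate : ContDiff ℝ 2 fun z => mollifier 1 (z - ζ) :=
      hsmooth.comp (contDiff_id.sub contDiff_const)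
    rw [lap_const_mul _ htranslate.contDiffAt, lap_comp_sub (mollifier 1),
      lap_comp_const_sub hsmooth]
  have h := lap_integral_kernel (μ := volume) (p := fun ζ => (φ ζ, ζ)) (hφ.prodMk continuous_id)
    (fun _ z => contDiffAt_mul_mollifier _ z) (locallyCompactlyIndexed_mul_mollifier φ) z
  simp only [hlap'] at h
  have htest : ContDiff ℝ (⊤ : ℕ∞) fun ζ => mollifier 1 (z - ζ) :=
    (contDiff_mollifier 1).comp (contDiff_const.sub contDiff_id)
  exact h.trans (hlap _ htest (hasCompactSupport_mollifier_const_sub one_pos z))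

lemma integral_mul_mollifier_sub {s t : ℝ} (hs : 0 < s) (ht : 0 < t) (z : ℂ) :
    (∫ ζ, φ ζ * mollifier s (z - ζ)) - ∫ ζ, φ ζ * mollifier t (z - ζ) =
      ∫ ζ, (logPotential s (z - ζ) - logPotential t (z - ζ)) ∂μ := by
  have hsmooth (s : ℝ) : ContDiff ℝ (⊤ : ℕ∞) fun ζ => logPotential s (z - ζ) :=
    (contDiff_logPotential s).comp (contDiff_const.sub contDiff_id)
  have hint {s : ℝ} (hs : 0 < s) : Integrable fun ζ => φ ζ * mollifier s (z - ζ) :=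
    (hφ.mul ((contDiff_mollifier s).continuous.comp
      (continuous_const.sub continuous_id))).integrable_of_hasCompactSupport
      (hasCompactSupport_mollifier_const_sub hs z).mul_left
  have hlapv (ζ : ℂ) : lap (fun ζ => logPotential s (z - ζ) - logPotential t (z - ζ)) ζ =
      mollifier s (z - ζ) - mollifier t (z - ζ) := by
    refine (lap_sub (contDiff_infty.1 (hsmooth s) 2).contDiffAt
      (contDiff_infty.1 (hsmooth t) 2).contDiffAt).trans ?_
    rw [lap_comp_const_sub (contDiff_infty.1 (contDiff_logPotential s) 2),
      lap_comp_const_sub (contDiff_infty.1 (contDiff_logPotential t) 2), lap_logPotential,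
      lap_logPotential]
  rw [← integral_sub (hint hs) (hint ht), ← hlap _ ((hsmooth s).sub (hsmooth t))
    (hasCompactSupport_logPotential_sub hs ht z)]
  simp only [hlapv, mul_sub]

variable [IsFiniteMeasureOnCompacts μ] {t : ℂ → ℝ} {L : ℝ≥0}
  (ht₀ : ∀ ζ, 0 < t ζ) (ht : LipschitzWith L t) (hL : L < 1)

include ht₀ ht hL

omit hlap in
lemma contDiff_regularisedPotential : ContDiff ℝ (⊤ : ℕ∞) (regularisedPotential φ μ t) :=
  (contDiff_integral_mul_mollifier hφ).add (contDiff_integral_logPotential_sub (μ := μ) ht₀ ht hL)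

lemma lap_regularisedPotential (z : ℂ) :
    lap (regularisedPotential φ μ t) z = smearedDensity μ t z :=
  calc lap (regularisedPotential φ μ t) z = smearedDensity μ (fun _ => 1) z +
        (smearedDensity μ t z - smearedDensity μ (fun _ => 1) z) := by
        rw [← lap_integral_logPotential_sub ht₀ ht hL,
          ← lap_integral_mul_mollifier hφ hlap]
        exact lap_add (contDiff_infty.1 (contDiff_integral_mul_mollifier hφ) 2).contDiffAt
          (contDiff_infty.1 (contDiff_integral_logPotential_sub ht₀ ht hL) 2).contDiffAt
    _ = smearedDensity μ t z := add_sub_cancel _ _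

lemma regularisedPotential_eq {s : ℝ} (hs : 0 < s) (z : ℂ) :
    regularisedPotential φ μ t z = (∫ ζ, φ ζ * mollifier s (z - ζ)) +
      ∫ ζ, (logPotential (t ζ) (z - ζ) - logPotential s (z - ζ)) ∂μ := by
  have hconst := integrable_logPotential_sub (μ := μ) (t := fun _ => s) (fun _ => hs)
    (LipschitzWith.const s) one_pos z
  have hsplit := integral_sub (integrable_logPotential_sub (μ := μ) ht₀ ht hL z) hconst
  simp only [sub_sub_sub_cancel_right] at hsplit
  rw [hsplit, ← integral_mul_mollifier_sub hφ hlap hs one_pos, regularisedPotential]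
  ring

end Potential

/-! ### Doubling measures -/

lemma measure_ball_add_measure_ball_le (μ : Measure ℂ) (z : ℂ) {a b : ℝ} (ha : 0 ≤ a)
    (hab : a ≤ b) :
    μ (ball z a) + μ (ball (z + ((a + b) / 2 : ℝ)) ((b - a) / 2)) ≤ μ (ball z b) := by
  have hnorm : ‖(((a + b) / 2 : ℝ) : ℂ)‖ = (a + b) / 2 := by
    rw [Complex.norm_real, Real.norm_of_nonneg (by linarith)]
  have hdisj : Disjoint (ball z a) (ball (z + ((a + b) / 2 : ℝ)) ((b - a) / 2)) :=
    ball_disjoint_ball (by rw [dist_self_add_right, hnorm]; linarith)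
  rw [← measure_union hdisj measurableSet_ball]
  refine measure_mono (union_subset (ball_subset_ball hab) (ball_subset_ball' ?_))
  rw [dist_self_add_left, hnorm]
  linarith

lemma ofReal_log_le_tsum {x : ℝ} (hx : 0 < x) :
    ENNReal.ofReal (Real.log x) ≤ ∑' k : ℕ, if 2 ^ k < x then 1 else 0 := by
  obtain ⟨n, hn, hlt⟩ : ∃ n : ℕ, x ≤ 2 ^ n ∧ ∀ k < n, 2 ^ k < x := by
    have h : ∃ n : ℕ, x ≤ 2 ^ n := (pow_unbounded_of_one_lt x one_lt_two).imp fun _ => le_of_lt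
    exact ⟨Nat.find h, Nat.find_spec h, fun k hk => not_le.1 (Nat.find_min h hk)⟩
  have hlog : Real.log x ≤ n :=
    calc Real.log x ≤ Real.log (2 ^ n) := Real.log_le_log hx hn
      _ = n * Real.log 2 := Real.log_pow 2 n
      _ ≤ n := mul_le_of_le_one_right n.cast_nonneg (by linarith [Real.log_two_lt_d9])
  calc ENNReal.ofReal (Real.log x) ≤ n := ENNReal.ofReal_le_of_le_toReal (by simpa using hlog)
    _ = ∑ k ∈ Finset.range n, if 2 ^ k < x then 1 else 0 := by
        rw [Finset.sum_congr rfl fun k hk => if_pos (hlt k (Finset.mem_range.1 hk)),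
          Finset.sum_const, Finset.card_range, nsmul_one]
    _ ≤ ∑' k : ℕ, if 2 ^ k < x then 1 else 0 := ENNReal.sum_le_tsum _

namespace IsDoubling

variable {μ : Measure ℂ} {C : ℝ≥0} (hμ : IsDoubling μ C)

include hμ

lemma measure_ball_two_pow_mul_le (z : ℂ) {r : ℝ} (hr : 0 < r) (n : ℕ) :
    μ (ball z (2 ^ n * r)) ≤ C ^ n * μ (ball z r) := by
  induction n with
  | zero => simp only [pow_zero, one_mul, le_refl]
  | succ n ih =>
    calc μ (ball z (2 ^ (n + 1) * r)) = μ (ball z (2 * (2 ^ n * r))) := by ring_nf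
      _ ≤ C * μ (ball z (2 ^ n * r)) := hμ z _ (by positivity)
      _ ≤ C * (C ^ n * μ (ball z r)) := by gcongr
      _ = C ^ (n + 1) * μ (ball z r) := by ring

lemma exists_measure_ball_le (z : ℂ) {r : ℝ} (hr : 0 < r) (R : ℝ) :
    ∃ n : ℕ, μ (ball z R) ≤ C ^ n * μ (ball z r) := by
  obtain ⟨n, hn⟩ := pow_unbounded_of_one_lt (R / r) one_lt_two
  exact ⟨n, (measure_mono (ball_subset_ball ((div_lt_iff₀ hr).1 hn).le)).trans
    (hμ.measure_ball_two_pow_mul_le z hr n)⟩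

lemma measureReal_ball_half_le [IsFiniteMeasureOnCompacts μ] (z : ℂ) {r : ℝ} (hr : 0 < r) :
    μ.real (ball z (r / 2)) ≤ (1 - ((C : ℝ) ^ 3)⁻¹) * μ.real (ball z r) := by
  set c : ℂ := z + ((r / 2 + r) / 2 : ℝ)
  have hannulus : μ.real (ball z (r / 2)) + μ.real (ball c (r / 4)) ≤ μ.real (ball z r) := by
    have h := measure_ball_add_measure_ball_le μ z (half_pos hr).le (half_le_self hr.le)
    rw [show (r - r / 2) / 2 = r / 4 by ring] at h
    have := ENNReal.toReal_mono measure_ball_lt_top.ne h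
    rwa [ENNReal.toReal_add measure_ball_lt_top.ne measure_ball_lt_top.ne] at this
  have hsub : ball z r ⊆ ball c (2 ^ 3 * (r / 4)) := by
    refine ball_subset_ball' ?_
    rw [dist_self_add_right, Complex.norm_real, Real.norm_of_nonneg (by positivity)]
    linarith
  have hdoubling : μ.real (ball z r) ≤ C ^ 3 * μ.real (ball c (r / 4)) := by
    have h := (measure_mono hsub).trans (hμ.measure_ball_two_pow_mul_le c (by positivity) 3)
    simpa [Measure.real] using ENNReal.toReal_mono
      (ENNReal.mul_ne_top (by finiteness) measure_ball_lt_top.ne) h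
  have := inv_mul_le_of_le_mul₀ (by positivity) measureReal_nonneg hdoubling
  linarith

end IsDoubling

namespace IsRadius

variable {μ : Measure ℂ} {ρ : ℂ → ℝ} (hρ : IsRadius μ ρ)

include hρ

lemma pos (z : ℂ) : 0 < ρ z := (hρ z).1

lemma measure_ball_eq_one (z : ℂ) : μ (ball z (ρ z)) = 1 := (hρ z).2

variable {C : ℝ≥0} (hμ : IsDoubling μ C)

include hμ

lemma isFiniteMeasureOnCompacts : IsFiniteMeasureOnCompacts μ where
  lt_top_of_isCompact K hK := by
    obtain ⟨R, hR⟩ := hK.isBounded.subset_ball 0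
    obtain ⟨n, hn⟩ := hμ.exists_measure_ball_le 0 (hρ.pos 0) R
    rw [hρ.measure_ball_eq_one, mul_one] at hn
    exact (measure_mono hR).trans_lt (hn.trans_lt (by finiteness))

lemma measure_ball_pos (z : ℂ) {r : ℝ} (hr : 0 < r) : 0 < μ (ball z r) := by
  obtain ⟨n, hn⟩ := hμ.exists_measure_ball_le z hr (ρ z)
  refine pos_iff_ne_zero.2 fun h => ?_
  rw [hρ.measure_ball_eq_one, h, mul_zero] at hn
  exact one_ne_zero (le_zero_iff.1 hn)

lemma one_le_doublingConstant : 1 ≤ C := by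
  have h := (measure_mono (ball_subset_ball (by linarith [hρ.pos 0]))).trans (hμ 0 _ (hρ.pos 0))
  rw [hρ.measure_ball_eq_one, mul_one] at h
  exact_mod_cast h

lemma strictMonoOn_measure_ball [IsFiniteMeasureOnCompacts μ] (z : ℂ) :
    StrictMonoOn (fun r => μ (ball z r)) (Ici 0) := fun a ha b _ hab =>
  (ENNReal.lt_add_right measure_ball_lt_top.ne
    (hρ.measure_ball_pos hμ _ (by linarith)).ne').trans_le
      (measure_ball_add_measure_ball_le μ z ha hab.le)

variable [IsFiniteMeasureOnCompacts μ]

lemma le_of_measure_ball_le_one {z : ℂ} {r : ℝ} (hr : μ (ball z r) ≤ 1) : r ≤ ρ z := by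
  by_contra! hlt
  have h : μ (ball z (ρ z)) < μ (ball z r) :=
    hρ.strictMonoOn_measure_ball hμ z (hρ.pos z).le ((hρ.pos z).trans hlt).le hlt
  rw [hρ.measure_ball_eq_one] at h
  exact h.not_ge hr

lemma lipschitzWith : LipschitzWith 1 ρ := by
  refine LipschitzWith.of_le_add fun z w => sub_le_iff_le_add.1 <|
    hρ.le_of_measure_ball_le_one hμ ?_
  refine (measure_mono (ball_subset_ball' ?_)).trans_eq (hρ.measure_ball_eq_one z)
  rw [dist_comm, sub_add_cancel]

lemma measure_ball_div_two_pow_le (z : ℂ) (n : ℕ) :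
    μ (ball z (ρ z / 2 ^ n)) ≤ ENNReal.ofReal (1 - ((C : ℝ) ^ 3)⁻¹) ^ n := by
  have hq : 0 ≤ 1 - ((C : ℝ) ^ 3)⁻¹ :=
    sub_nonneg.2 (inv_le_one_of_one_le₀ (one_le_pow₀ (hρ.one_le_doublingConstant hμ)))
  induction n with
  | zero => simp only [pow_zero, div_one, hρ.measure_ball_eq_one, le_refl]
  | succ n ih =>
    have hhalf := hμ.measureReal_ball_half_le z (div_pos (hρ.pos z) (pow_pos two_pos n))
    rw [div_div, ← pow_succ] at hhalf
    calc μ (ball z (ρ z / 2 ^ (n + 1)))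
        ≤ ENNReal.ofReal ((1 - ((C : ℝ) ^ 3)⁻¹) * μ.real (ball z (ρ z / 2 ^ n))) :=
          (ENNReal.le_ofReal_iff_toReal_le measure_ball_lt_top.ne (by positivity)).2 hhalf
      _ = ENNReal.ofReal (1 - ((C : ℝ) ^ 3)⁻¹) * μ (ball z (ρ z / 2 ^ n)) := by
          rw [ENNReal.ofReal_mul hq, ofReal_measureReal measure_ball_lt_top.ne]
      _ ≤ ENNReal.ofReal (1 - ((C : ℝ) ^ 3)⁻¹) * ENNReal.ofReal (1 - ((C : ℝ) ^ 3)⁻¹) ^ n := by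
          gcongr
      _ = ENNReal.ofReal (1 - ((C : ℝ) ^ 3)⁻¹) ^ (n + 1) := (pow_succ' _ _).symm

lemma lintegral_log_div_le (z : ℂ) {s : ℝ} (hs : 0 < s) :
    ∫⁻ ζ, ENNReal.ofReal (Real.log (ρ z / max ‖z - ζ‖ s)) ∂μ ≤ (C : ℝ≥0∞) ^ 3 := by
  have hmax (ζ : ℂ) : 0 < max ‖z - ζ‖ s := lt_max_of_lt_right hs
  have hdyadic (k : ℕ) (ζ : ℂ) : (if 2 ^ k < ρ z / max ‖z - ζ‖ s then 1 else 0) ≤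
      (ball z (ρ z / 2 ^ k)).indicator (1 : ℂ → ℝ≥0∞) ζ := by
    split_ifs with h
    · have hζ : ζ ∈ ball z (ρ z / 2 ^ k) := by
        rw [mem_ball', dist_eq_norm]
        exact (le_max_left _ s).trans_lt ((lt_div_comm₀ (by positivity) (hmax ζ)).1 h)
      simp only [indicator_of_mem hζ, Pi.one_apply, le_refl]
    · exact zero_le
  have hq : (1 - ENNReal.ofReal (1 - ((C : ℝ) ^ 3)⁻¹))⁻¹ = (C : ℝ≥0∞) ^ 3 := by
    have hC : 1 ≤ (C : ℝ) ^ 3 := one_le_pow₀ (hρ.one_le_doublingConstant hμ)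
    rw [← ENNReal.ofReal_one, ← ENNReal.ofReal_sub _ (sub_nonneg.2 (inv_le_one_of_one_le₀ hC)),
      sub_sub_cancel, ENNReal.ofReal_inv_of_pos (by linarith), inv_inv,
      ENNReal.ofReal_pow C.coe_nonneg, ENNReal.ofReal_coe_nnreal]
  calc ∫⁻ ζ, ENNReal.ofReal (Real.log (ρ z / max ‖z - ζ‖ s)) ∂μ
      ≤ ∫⁻ ζ, ∑' k : ℕ, (ball z (ρ z / 2 ^ k)).indicator 1 ζ ∂μ :=
        lintegral_mono fun ζ => (ofReal_log_le_tsum (div_pos (hρ.pos z) (hmax ζ))).trans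
          (ENNReal.tsum_le_tsum fun k => hdyadic k ζ)
    _ = ∑' k : ℕ, μ (ball z (ρ z / 2 ^ k)) := by
        rw [lintegral_tsum fun k => (measurable_one.indicator measurableSet_ball).aemeasurable]
        simp only [lintegral_indicator_one measurableSet_ball]
    _ ≤ ∑' k : ℕ, ENNReal.ofReal (1 - ((C : ℝ) ^ 3)⁻¹) ^ k :=
        ENNReal.tsum_le_tsum (hρ.measure_ball_div_two_pow_le hμ z)
    _ = (C : ℝ≥0∞) ^ 3 := by rw [ENNReal.tsum_geometric, hq]

end IsRadius

/-! ### The smeared measure -/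

lemma continuous_measure_ball {X : Type*} [PseudoMetricSpace X] [ProperSpace X] [MeasurableSpace X]
    [OpensMeasurableSpace X] {ν : Measure X} [IsFiniteMeasureOnCompacts ν] {x : X}
    (hν : ∀ r, ν (sphere x r) = 0) : Continuous fun r => ν (ball x r) := by
  refine continuous_iff_continuousAt.2 fun r₀ =>
    tendsto_measure_of_ae_tendsto_indicator (𝓝 r₀) measurableSet_ball (fun _ => measurableSet_ball)
      (measurableSet_ball (x := x) (ε := r₀ + 1)) measure_ball_lt_top.ne ?_ ?_
  · filter_upwards [eventually_le_nhds (lt_add_one r₀)] with r hr using ball_subset_ball hr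
  · filter_upwards [measure_eq_zero_iff_ae_notMem.1 (hν r₀)] with w hw
    rcases lt_or_gt_of_ne hw with h | h
    · filter_upwards [eventually_gt_nhds h] with r hr using iff_of_true hr h
    · filter_upwards [eventually_lt_nhds h] with r hr using iff_of_false hr.not_gt h.not_gt

lemma smearedDensity_nonneg (μ : Measure ℂ) (t : ℂ → ℝ) (z : ℂ) : 0 ≤ smearedDensity μ t z :=
  integral_nonneg fun ζ => mollifier_nonneg (t ζ) (z - ζ)

/-- The measure obtained from `μ` by replacing each point mass `δ_ζ` with a smooth radial
probability measure on the disk of radius `t ζ` about `ζ`. -/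
def smearedMeasure (μ : Measure ℂ) (t : ℂ → ℝ) : Measure ℂ :=
  volume.withDensity fun z => ENNReal.ofReal (smearedDensity μ t z)

lemma lintegral_mollifier {t : ℝ} (ht : 0 < t) (ζ : ℂ) :
    ∫⁻ w, ENNReal.ofReal (mollifier t (w - ζ)) = 1 := by
  have hsupp : HasCompactSupport (mollifier t) :=
    HasCompactSupport.intro (isCompact_closedBall 0 t) fun w hw =>
      mollifier_of_le_norm ht (not_le.1 (mem_closedBall_zero_iff.not.1 hw)).le
  rw [lintegral_sub_right_eq_self (fun w => ENNReal.ofReal (mollifier t w)),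
    ← ofReal_integral_eq_lintegral_ofReal
      ((contDiff_mollifier t).continuous.integrable_of_hasCompactSupport hsupp)
      (ae_of_all _ (mollifier_nonneg t)), integral_mollifier ht.ne', ENNReal.ofReal_one]

section SmearedMeasure

variable {μ : Measure ℂ} [IsFiniteMeasureOnCompacts μ] {t : ℂ → ℝ} {L : ℝ≥0}
  (ht₀ : ∀ ζ, 0 < t ζ) (ht : LipschitzWith L t) (hL : L < 1)

include ht₀ ht hL

lemma smearedMeasure_apply {A : Set ℂ} (hA : MeasurableSet A) :
    smearedMeasure μ t A = ∫⁻ ζ, (∫⁻ w in A, ENNReal.ofReal (mollifier (t ζ) (w - ζ))) ∂μ := by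
  have hdensity (w : ℂ) : ENNReal.ofReal (smearedDensity μ t w) =
      ∫⁻ ζ, ENNReal.ofReal (mollifier (t ζ) (w - ζ)) ∂μ :=
    ofReal_integral_eq_lintegral_ofReal (integrable_mollifier ht₀ ht hL w)
      (ae_of_all _ fun ζ => mollifier_nonneg _ _)
  have hcont : Continuous fun y : ℂ × ℂ => mollifier (t y.2) (y.1 - y.2) :=
    continuous_uncurry_kernel (p := fun ζ => (t ζ, ζ)) (ht.continuous.prodMk continuous_id)
      fun ζ z => contDiffAt_mollifier_sub (ht₀ ζ).ne' z
  rw [smearedMeasure, withDensity_apply _ hA]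
  simp only [hdensity]
  exact lintegral_lintegral_swap hcont.measurable.ennreal_ofReal.aemeasurable

lemma measure_le_smearedMeasure {A B : Set ℂ} (hA : MeasurableSet A) (hB : MeasurableSet B)
    (h : ∀ ζ ∈ B, ball ζ (t ζ) ⊆ A) : μ B ≤ smearedMeasure μ t A := by
  rw [smearedMeasure_apply ht₀ ht hL hA, ← lintegral_indicator_one hB]
  refine lintegral_mono (indicator_le fun ζ hζ => ?_)
  rw [Pi.one_apply, ← lintegral_mollifier (ht₀ ζ) ζ]
  refine (setLIntegral_eq_of_support_subset fun w hw => h ζ hζ ?_).ge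
  by_contra hfar
  rw [mem_ball, dist_eq_norm, not_lt] at hfar
  exact hw (by simp only [mollifier_of_le_norm (ht₀ ζ) hfar, ENNReal.ofReal_zero])

lemma smearedMeasure_le_measure {A B : Set ℂ} (hA : MeasurableSet A) (hB : MeasurableSet B)
    (h : ∀ ζ ∉ B, Disjoint A (ball ζ (t ζ))) : smearedMeasure μ t A ≤ μ B := by
  rw [smearedMeasure_apply ht₀ ht hL hA, ← lintegral_indicator_one hB]
  refine lintegral_mono fun ζ => ?_
  by_cases hζ : ζ ∈ B
  · rw [indicator_of_mem hζ, Pi.one_apply, ← lintegral_mollifier (ht₀ ζ) ζ]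
    exact setLIntegral_le_lintegral _ _
  · refine (setLIntegral_eq_zero hA fun w hw => ?_).trans_le zero_le
    have hfar := disjoint_left.1 (h ζ hζ) hw
    rw [mem_ball, dist_eq_norm, not_lt] at hfar
    simp only [mollifier_of_le_norm (ht₀ ζ) hfar, ENNReal.ofReal_zero, Pi.zero_apply]

lemma isFiniteMeasureOnCompacts_smearedMeasure : IsFiniteMeasureOnCompacts (smearedMeasure μ t) :=
  have : IsLocallyFiniteMeasure (smearedMeasure μ t) :=
    IsLocallyFiniteMeasure.withDensity_ofReal (contDiff_smearedDensity ht₀ ht hL).continuous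
  isFiniteMeasureOnCompacts_of_isLocallyFiniteMeasure

end SmearedMeasure

lemma smearedMeasure_sphere (μ : Measure ℂ) (t : ℂ → ℝ) (z : ℂ) (r : ℝ) :
    smearedMeasure μ t (sphere z r) = 0 :=
  withDensity_absolutelyContinuous _ _ (Measure.addHaar_sphere volume z r)

/-! ### Comparability with the inverse square of the radius -/

/-- The functions `f` and `g` agree up to the factor `K`; the paper writes `f ≃ g`. -/
def ComparableWith (K : ℝ) (f g : ℂ → ℝ) : Prop := ∀ z, K⁻¹ * g z ≤ f z ∧ f z ≤ K * g z

namespace ComparableWith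

variable {K K' : ℝ} {f g h : ℂ → ℝ}

lemma mono (hfg : ComparableWith K f g) (hg : 0 ≤ g) (hK : 0 < K) (hKK' : K ≤ K') :
    ComparableWith K' f g := fun z =>
  ⟨(mul_le_mul_of_nonneg_right (inv_anti₀ hK hKK') (hg z)).trans (hfg z).1,
    (hfg z).2.trans (mul_le_mul_of_nonneg_right hKK' (hg z))⟩

lemma trans (hfg : ComparableWith K f g) (hgh : ComparableWith K' g h) (hK : 0 < K) :
    ComparableWith (K * K') f h := fun z =>
  ⟨calc (K * K')⁻¹ * h z = K⁻¹ * (K'⁻¹ * h z) := by rw [mul_inv, mul_assoc]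
      _ ≤ K⁻¹ * g z := by gcongr; exact (hgh z).1
      _ ≤ f z := (hfg z).1,
    calc f z ≤ K * g z := (hfg z).2
      _ ≤ K * (K' * h z) := by gcongr; exact (hgh z).2
      _ = K * K' * h z := by rw [mul_assoc]⟩

end ComparableWith

section DensityComparison

variable {ρ f : ℂ → ℝ} {K : ℝ} (hρ₀ : ∀ z, 0 < ρ z) (hρ : LipschitzWith 1 ρ) (hK : 0 < K)
  (hf : ComparableWith K f fun z => (ρ z ^ 2)⁻¹) {z : ℂ} {r : ℝ}

include hρ₀ hρ hK hf

lemma withDensity_ball_le (hr : r ≤ ρ z / 2) :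
    volume.withDensity (fun w => ENNReal.ofReal (f w)) (ball z r) ≤
      ENNReal.ofReal (4 * K * (ρ z ^ 2)⁻¹) * volume (ball z r) := by
  rw [withDensity_apply _ measurableSet_ball, ← setLIntegral_const]
  refine setLIntegral_mono measurable_const fun w hw => ENNReal.ofReal_le_ofReal ?_
  have hρw : ρ z / 2 ≤ ρ w := by
    have := hρ.le_add_mul z w
    rw [NNReal.coe_one, one_mul] at this
    linarith [mem_ball'.1 hw]
  have := hρ₀ z
  calc f w ≤ K * (ρ w ^ 2)⁻¹ := (hf w).2
    _ ≤ K * ((ρ z / 2) ^ 2)⁻¹ := by gcongr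
    _ = 4 * K * (ρ z ^ 2)⁻¹ := by field_simp; norm_num

lemma le_withDensity_ball (hr : r ≤ ρ z / 2) :
    ENNReal.ofReal ((4 * K)⁻¹ * (ρ z ^ 2)⁻¹) * volume (ball z r) ≤
      volume.withDensity (fun w => ENNReal.ofReal (f w)) (ball z r) := by
  rw [withDensity_apply _ measurableSet_ball, ← setLIntegral_const]
  refine setLIntegral_mono' measurableSet_ball fun w hw => ENNReal.ofReal_le_ofReal ?_
  have hρw : ρ w ≤ 2 * ρ z := by
    have := hρ.le_add_mul w z
    rw [NNReal.coe_one, one_mul] at this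
    linarith [mem_ball.1 hw, hρ₀ z]
  have := hρ₀ z
  have := hρ₀ w
  calc (4 * K)⁻¹ * (ρ z ^ 2)⁻¹ = K⁻¹ * ((2 * ρ z) ^ 2)⁻¹ := by field_simp; norm_num
    _ ≤ K⁻¹ * (ρ w ^ 2)⁻¹ := by gcongr
    _ ≤ f w := (hf w).1

lemma withDensity_ball_two_mul_le (hr : r ≤ ρ z / 4) :
    volume.withDensity (fun w => ENNReal.ofReal (f w)) (ball z (2 * r)) ≤
      ENNReal.ofReal (64 * K ^ 2) *
        volume.withDensity (fun w => ENNReal.ofReal (f w)) (ball z r) := by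
  have := hρ₀ z
  have hvol : volume (ball z (2 * r)) = ENNReal.ofReal 4 * volume (ball z r) := by
    rw [Complex.volume_ball, Complex.volume_ball, ENNReal.ofReal_mul zero_le_two, mul_pow,
      ← ENNReal.ofReal_pow zero_le_two, mul_assoc]
    norm_num
  calc volume.withDensity (fun w => ENNReal.ofReal (f w)) (ball z (2 * r))
      ≤ ENNReal.ofReal (4 * K * (ρ z ^ 2)⁻¹) * volume (ball z (2 * r)) :=
        withDensity_ball_le hρ₀ hρ hK hf (by linarith)
    _ = ENNReal.ofReal (64 * K ^ 2) *
          (ENNReal.ofReal ((4 * K)⁻¹ * (ρ z ^ 2)⁻¹) * volume (ball z r)) := by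
        rw [hvol, ← mul_assoc, ← mul_assoc, ← ENNReal.ofReal_mul (by positivity),
          ← ENNReal.ofReal_mul (by positivity)]
        congr 2
        field_simp
        norm_num
    _ ≤ _ := by
        gcongr
        exact le_withDensity_ball hρ₀ hρ hK hf (by linarith)

lemma sq_le_of_withDensity_ball_eq_one (hr : 0 < r)
    (h : volume.withDensity (fun w => ENNReal.ofReal (f w)) (ball z r) = 1) :
    ρ z ^ 2 ≤ (4 + 16 * K) * r ^ 2 := by
  have hz := hρ₀ z
  rcases le_or_gt r (ρ z / 2) with hsmall | hlarge
  · have hvol : volume (ball z r) ≤ ENNReal.ofReal (4 * r ^ 2) := by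
      rw [Complex.volume_ball, ← ENNReal.ofReal_coe_nnreal, NNReal.coe_real_pi,
        ← ENNReal.ofReal_pow hr.le, ← ENNReal.ofReal_mul (by positivity), mul_comm]
      gcongr
      exact Real.pi_le_four
    have hmass := withDensity_ball_le hρ₀ hρ hK hf hsmall
    rw [h] at hmass
    have hone := hmass.trans (mul_le_mul_right hvol _)
    rw [← ENNReal.ofReal_mul (by positivity), ENNReal.one_le_ofReal] at hone
    have : ρ z ^ 2 ≤ 16 * K * r ^ 2 :=
      calc ρ z ^ 2 = ρ z ^ 2 * 1 := (mul_one _).symm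
        _ ≤ ρ z ^ 2 * (4 * K * (ρ z ^ 2)⁻¹ * (4 * r ^ 2)) := by gcongr
        _ = 16 * K * r ^ 2 := by field_simp; norm_num
    nlinarith [sq_nonneg r]
  · have : ρ z ^ 2 ≤ (2 * r) ^ 2 := by gcongr; linarith
    have : 0 ≤ K * r ^ 2 := by positivity
    linarith

end DensityComparison

namespace IsRadius

variable {μ : Measure ℂ} {ρ : ℂ → ℝ} (hρ : IsRadius μ ρ)

include hρ

lemma div_eight_pos (ζ : ℂ) : 0 < ρ ζ / 8 := div_pos (hρ.pos ζ) (by norm_num)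

variable [IsFiniteMeasureOnCompacts μ]

lemma norm_integral_le {E : Type*} [NormedAddCommGroup E] [NormedSpace ℝ E] {k : ℂ → E} {z : ℂ}
    {M : ℝ} (hk : ∀ ζ ∉ ball z (ρ z), k ζ = 0) (hM : ∀ ζ, ‖k ζ‖ ≤ M) : ‖∫ ζ, k ζ ∂μ‖ ≤ M := by
  have hmass : μ.real (ball z (ρ z)) = 1 := by
    rw [Measure.real, hρ.measure_ball_eq_one, ENNReal.toReal_one]
  have h := norm_setIntegral_le_of_norm_le_const (μ := μ) (s := ball z (ρ z))
    measure_ball_lt_top fun ζ _ => hM ζ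
  rwa [hmass, mul_one, setIntegral_eq_integral_of_forall_compl_eq_zero hk] at h

variable {C : ℝ≥0} (hμ : IsDoubling μ C)

include hμ

lemma le_add_dist (z ζ : ℂ) : ρ z ≤ ρ ζ + dist z ζ := by
  simpa only [NNReal.coe_one, one_mul] using (hρ.lipschitzWith hμ).le_add_mul z ζ

lemma lipschitzWith_div_eight : LipschitzWith (1 / 8) fun ζ => ρ ζ / 8 := by
  refine LipschitzWith.of_le_add_mul _ fun z ζ => ?_
  have := hρ.le_add_dist hμ z ζ
  push_cast
  linarith

lemma le_div_eight_or (z ζ : ℂ) :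
    ρ ζ / 8 ≤ ‖z - ζ‖ ∨ ζ ∈ ball z (ρ z) ∧ ρ z / 9 ≤ ρ ζ / 8 := by
  refine (le_or_gt (ρ ζ / 8) ‖z - ζ‖).imp_right fun h => ?_
  rw [mem_ball']
  rw [← dist_eq_norm] at h
  have h₁ := hρ.le_add_dist hμ z ζ
  have h₂ := hρ.le_add_dist hμ ζ z
  rw [dist_comm ζ z] at h₂
  have := hρ.pos z
  constructor <;> linarith

end IsRadius

/-! ### Smearing at the scale of the radius -/

lemma fderiv_mollifier_of_le_norm {t : ℝ} (ht : 0 < t) {w : ℂ} (hw : t ≤ ‖w‖) :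
    fderiv ℝ (mollifier t) w = 0 :=
  IsLocalMin.fderiv_eq_zero <| Eventually.of_forall fun v => by
    rw [mollifier_of_le_norm ht hw]
    exact mollifier_nonneg t v

namespace IsRadius

variable {μ : Measure ℂ} [IsFiniteMeasureOnCompacts μ] {ρ : ℂ → ℝ} (hρ : IsRadius μ ρ) {C : ℝ≥0}
  (hμ : IsDoubling μ C)

include hρ hμ

lemma norm_integral_kernel_le {E : Type*} [NormedAddCommGroup E] [NormedSpace ℝ E]
    {k : ℝ → ℂ → E} (hk : ∀ t > 0, ∀ w, t ≤ ‖w‖ → k t w = 0) {B : ℝ} {n : ℕ}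
    (hB : ∀ t > 0, ∀ w, ‖k t w‖ ≤ B / t ^ n) (z : ℂ) :
    ‖∫ ζ, k (ρ ζ / 8) (z - ζ) ∂μ‖ ≤ 9 ^ n * B * (ρ z ^ n)⁻¹ := by
  have hB₀ : 0 ≤ B := by simpa using (norm_nonneg _).trans (hB 1 one_pos 0)
  have hz := hρ.pos z
  refine hρ.norm_integral_le (z := z) (fun ζ hζ => ?_) fun ζ => ?_
  · rcases hρ.le_div_eight_or hμ z ζ with h | h
    · exact hk _ (hρ.div_eight_pos ζ) _ h
    · exact absurd h.1 hζ
  · rcases hρ.le_div_eight_or hμ z ζ with h | h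
    · rw [hk _ (hρ.div_eight_pos ζ) _ h, norm_zero]
      positivity
    · calc ‖k (ρ ζ / 8) (z - ζ)‖ ≤ B / (ρ ζ / 8) ^ n := hB _ (hρ.div_eight_pos ζ) _
        _ ≤ B / (ρ z / 9) ^ n := by gcongr B / ?_ ^ n; exact h.2
        _ = 9 ^ n * B * (ρ z ^ n)⁻¹ := by rw [div_pow, div_div_eq_mul_div]; ring

lemma inv_mul_le_smearedDensity (z : ℂ) :
    ((C : ℝ) ^ 5)⁻¹ * (ρ z ^ 2)⁻¹ ≤ smearedDensity μ (fun ζ => ρ ζ / 8) z := by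
  have hz := hρ.pos z
  have hint := integrable_mollifier (μ := μ) hρ.div_eight_pos (hρ.lipschitzWith_div_eight hμ)
    (by norm_num) z
  have hmass : ((C : ℝ) ^ 5)⁻¹ ≤ μ.real (ball z (ρ z / 32)) := by
    have h := hμ.measure_ball_two_pow_mul_le z (div_pos hz (by norm_num : (0 : ℝ) < 32)) 5
    rw [show 2 ^ 5 * (ρ z / 32) = ρ z by ring, hρ.measure_ball_eq_one] at h
    have hreal : 1 ≤ (C : ℝ) ^ 5 * μ.real (ball z (ρ z / 32)) := by
      simpa [Measure.real] using ENNReal.toReal_mono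
        (ENNReal.mul_ne_top (by finiteness) measure_ball_lt_top.ne) h
    simpa using inv_mul_le_of_le_mul₀ (by positivity) measureReal_nonneg hreal
  have hlower (ζ : ℂ) (hζ : ζ ∈ ball z (ρ z / 32)) :
      (ρ z ^ 2)⁻¹ ≤ mollifier (ρ ζ / 8) (z - ζ) := by
    have h₁ := hρ.le_add_dist hμ z ζ
    have h₂ := hρ.le_add_dist hμ ζ z
    rw [dist_comm ζ z] at h₂
    rw [mem_ball', dist_eq_norm] at hζ
    rw [dist_eq_norm] at h₁ h₂
    rw [mollifier_of_norm_le_half (hρ.div_eight_pos ζ) (by linarith), ← mul_inv]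
    have := hρ.pos ζ
    gcongr
    calc (ρ ζ / 8) ^ 2 * π ≤ (ρ z / 4) ^ 2 * 4 :=
          mul_le_mul (pow_le_pow_left₀ (by positivity) (by linarith) 2) Real.pi_le_four
            Real.pi_nonneg (by positivity)
      _ ≤ ρ z ^ 2 := by nlinarith
  calc ((C : ℝ) ^ 5)⁻¹ * (ρ z ^ 2)⁻¹ ≤ μ.real (ball z (ρ z / 32)) * (ρ z ^ 2)⁻¹ := by gcongr
    _ ≤ ∫ ζ in ball z (ρ z / 32), mollifier (ρ ζ / 8) (z - ζ) ∂μ := by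
        rw [mul_comm]
        exact setIntegral_ge_of_const_le_real measurableSet_ball measure_ball_lt_top.ne hlower
          hint.integrableOn
    _ ≤ smearedDensity μ (fun ζ => ρ ζ / 8) z :=
        setIntegral_le_integral hint (ae_of_all _ fun ζ => mollifier_nonneg _ _)

lemma exists_comparableWith_smearedDensity : ∃ K : ℝ, 0 < K ∧
    ComparableWith K (smearedDensity μ fun ζ => ρ ζ / 8) (fun z => (ρ z ^ 2)⁻¹) ∧
    ∀ z, ‖fderiv ℝ (smearedDensity μ fun ζ => ρ ζ / 8) z‖ ≤ K * (ρ z ^ 3)⁻¹ := by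
  obtain ⟨B, hB⟩ := exists_forall_mollifier_le
  have hB₀ : 0 ≤ B := by simpa using (mollifier_nonneg 1 0).trans (hB 1 one_pos 0).1
  have hC : 0 < (C : ℝ) ^ 5 := pow_pos (one_pos.trans_le (hρ.one_le_doublingConstant hμ)) 5
  have hz (z : ℂ) := hρ.pos z
  refine ⟨C ^ 5 + 9 ^ 3 * B, by positivity, fun z => ⟨?_, ?_⟩, fun z => ?_⟩
  · refine le_trans ?_ (hρ.inv_mul_le_smearedDensity hμ z)
    have := hz z
    gcongr
    exact le_add_of_nonneg_right (by positivity)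
  · refine (le_abs_self _).trans ((hρ.norm_integral_kernel_le hμ
      (fun t ht w => mollifier_of_le_norm ht) (n := 2) (B := B) (fun t ht w => ?_) z).trans ?_)
    · rw [Real.norm_of_nonneg (mollifier_nonneg t w)]
      exact (hB t ht w).1
    · have := hz z
      gcongr
      linarith
  · rw [fderiv_smearedDensity hρ.div_eight_pos (hρ.lipschitzWith_div_eight hμ)
      (by norm_num)]
    refine (hρ.norm_integral_kernel_le hμ (fun t ht w => fderiv_mollifier_of_le_norm ht)
      (fun t ht w => (hB t ht w).2) z).trans ?_
    have := hz z
    gcongr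
    exact le_add_of_nonneg_left hC.le

end IsRadius

namespace IsRadius

variable {μ : Measure ℂ} [IsFiniteMeasureOnCompacts μ] {ρ : ℂ → ℝ} (hρ : IsRadius μ ρ) {C : ℝ≥0}
  (hμ : IsDoubling μ C)

include hρ hμ

lemma measure_ball_div_four_le {z : ℂ} {r : ℝ} (hr : ρ z / 4 ≤ r) :
    μ (ball z (r / 4)) ≤ smearedMeasure μ (fun ζ => ρ ζ / 8) (ball z r) := by
  refine measure_le_smearedMeasure hρ.div_eight_pos (hρ.lipschitzWith_div_eight hμ) (by norm_num)
    measurableSet_ball measurableSet_ball fun ζ hζ => ball_subset_ball' ?_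
  linarith [hρ.le_add_dist hμ ζ z, mem_ball.1 hζ, hρ.pos z]

lemma smearedMeasure_ball_le {z : ℂ} {r : ℝ} (hr : ρ z / 4 ≤ r) :
    smearedMeasure μ (fun ζ => ρ ζ / 8) (ball z r) ≤ μ (ball z (2 * r)) := by
  refine smearedMeasure_le_measure hρ.div_eight_pos (hρ.lipschitzWith_div_eight hμ) (by norm_num)
    measurableSet_ball measurableSet_ball fun ζ hζ => ball_disjoint_ball ?_
  rw [mem_ball', not_lt] at hζ
  linarith [hρ.le_add_dist hμ ζ z, dist_comm ζ z, hρ.pos z]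

lemma exists_isRadius_smearedMeasure :
    ∃ ρ' : ℂ → ℝ, IsRadius (smearedMeasure μ fun ζ => ρ ζ / 8) ρ' := by
  have := isFiniteMeasureOnCompacts_smearedMeasure (μ := μ) hρ.div_eight_pos
    (hρ.lipschitzWith_div_eight hμ) (by norm_num)
  refine (Classical.skolem (p := fun z r =>
    0 < r ∧ smearedMeasure μ (fun ζ => ρ ζ / 8) (ball z r) = 1)).1 fun z => ?_
  have hz := hρ.pos z
  have hone : 1 ≤ smearedMeasure μ (fun ζ => ρ ζ / 8) (ball z (4 * ρ z)) := by
    rw [← hρ.measure_ball_eq_one z]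
    convert hρ.measure_ball_div_four_le hμ (by linarith : ρ z / 4 ≤ 4 * ρ z) using 3
    ring
  obtain ⟨r, hr, hr_one⟩ := intermediate_value_Icc (by positivity : 0 ≤ 4 * ρ z)
    (continuous_measure_ball (smearedMeasure_sphere μ _ z)).continuousOn
    ⟨by simp only [ball_zero, measure_empty, zero_le], hone⟩
  refine ⟨r, hr.1.lt_of_ne fun h => ?_, hr_one⟩
  simp only [← h, ball_zero, measure_empty, zero_ne_one] at hr_one

variable {K : ℝ} (hK : 0 < K)
  (hf : ComparableWith K (smearedDensity μ fun ζ => ρ ζ / 8) fun z => (ρ z ^ 2)⁻¹)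

include hK hf

lemma isDoubling_smearedMeasure :
    IsDoubling (smearedMeasure μ fun ζ => ρ ζ / 8) (C ^ 4 + (64 * K ^ 2).toNNReal) := by
  intro z r hr
  push_cast
  rw [add_mul]
  rcases le_total (ρ z / 4) r with hlarge | hsmall
  · refine le_add_right ?_
    calc smearedMeasure μ (fun ζ => ρ ζ / 8) (ball z (2 * r)) ≤ μ (ball z (2 * (2 * r))) :=
          hρ.smearedMeasure_ball_le hμ (by linarith)
      _ = μ (ball z (2 ^ 4 * (r / 4))) := by ring_nf
      _ ≤ C ^ 4 * μ (ball z (r / 4)) := hμ.measure_ball_two_pow_mul_le z (by positivity) 4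
      _ ≤ C ^ 4 * smearedMeasure μ (fun ζ => ρ ζ / 8) (ball z r) := by
          gcongr C ^ 4 * ?_
          exact hρ.measure_ball_div_four_le hμ hlarge
  · exact le_add_left (withDensity_ball_two_mul_le hρ.pos (hρ.lipschitzWith hμ) hK hf hsmall)

lemma comparableWith_inv_sq {ρ' : ℂ → ℝ}
    (hρ' : IsRadius (smearedMeasure μ fun ζ => ρ ζ / 8) ρ') :
    ComparableWith (16 + 16 * K) (fun z => (ρ z ^ 2)⁻¹) fun z => (ρ' z ^ 2)⁻¹ := by
  intro z
  have hz := hρ.pos z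
  have hz' := hρ'.pos z
  have hlower : ρ z ^ 2 ≤ (4 + 16 * K) * ρ' z ^ 2 :=
    sq_le_of_withDensity_ball_eq_one hρ.pos (hρ.lipschitzWith hμ) hK hf hz'
      (hρ'.measure_ball_eq_one z)
  have hupper : ρ' z ≤ 4 * ρ z := by
    rcases le_total (ρ z / 4) (ρ' z) with h | h
    · have := hρ.le_of_measure_ball_le_one hμ <|
        (hρ.measure_ball_div_four_le hμ h).trans_eq (hρ'.measure_ball_eq_one z)
      linarith
    · linarith
  constructor
  · rw [← mul_inv]
    refine inv_anti₀ (by positivity) ?_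
    nlinarith [sq_nonneg (ρ' z)]
  · rw [← div_eq_mul_inv, le_div_iff₀ (by positivity), inv_mul_le_iff₀ (by positivity)]
    nlinarith [mul_pos hK (pow_pos hz 2)]

end IsRadius

/-! ### The potential stays close to the original function -/

lemma abs_integral_mul_mollifier_sub_le {φ : ℂ → ℝ} (hφ : Continuous φ) {z : ℂ} {s ε : ℝ}
    (hs : 0 < s) (hε : 0 ≤ ε) (h : ∀ ζ ∈ ball z s, dist (φ ζ) (φ z) ≤ ε) :
    |(∫ ζ, φ ζ * mollifier s (z - ζ)) - φ z| ≤ ε := by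
  have hsupp : Function.support (mollifier s) ⊆ ball 0 s := fun w hw => by
    by_contra hfar
    rw [mem_ball_zero_iff, not_lt] at hfar
    exact hw (mollifier_of_le_norm hs hfar)
  have hconv := dist_convolution_le (μ := volume) hε hsupp (mollifier_nonneg s)
    (integral_mollifier hs.ne') hφ.aestronglyMeasurable h
  rw [convolution_lsmul_swap, Real.dist_eq] at hconv
  simpa only [smul_eq_mul, mul_comm] using hconv

lemma abs_logPotential_sub_le {s t R : ℝ} (hs : 0 < s) (ht : 0 < t) {w : ℂ}
    (hst : max ‖w‖ s ≤ max ‖w‖ t) (hR : max ‖w‖ t ≤ R) :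
    |logPotential t w - logPotential s w| ≤ 2 + Real.log (R / max ‖w‖ s) := by
  have hs' : 0 < max ‖w‖ s := lt_max_of_lt_right hs
  have ht' : 0 < max ‖w‖ t := lt_max_of_lt_right ht
  have hlog : 0 ≤ Real.log (max ‖w‖ t) - Real.log (max ‖w‖ s) :=
    sub_nonneg.2 (Real.log_le_log hs' hst)
  have hlogR : Real.log (max ‖w‖ t) ≤ Real.log R := Real.log_le_log ht' hR
  have hπ : (2 * π)⁻¹ ≤ 1 := inv_le_one_of_one_le₀ (by linarith [Real.two_le_pi])
  have hπ₀ : 0 ≤ (2 * π)⁻¹ := by positivity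
  rw [Real.log_div (ht'.trans_le hR).ne' hs'.ne']
  have hs₁ := abs_le.1 (abs_logPotential_sub_log_max_le_one hs w)
  have ht₁ := abs_le.1 (abs_logPotential_sub_log_max_le_one ht w)
  have hle := mul_le_of_le_one_left hlog hπ
  have hge := mul_nonneg hπ₀ hlog
  rw [mul_sub] at hle hge
  rw [abs_le]
  constructor <;> linarith [hs₁.1, hs₁.2, ht₁.1, ht₁.2]

namespace IsRadius

variable {μ : Measure ℂ} [IsFiniteMeasureOnCompacts μ] {ρ : ℂ → ℝ} (hρ : IsRadius μ ρ) {C : ℝ≥0}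
  (hμ : IsDoubling μ C)

include hρ hμ

lemma enorm_logPotential_sub_le {z : ℂ} {s : ℝ} (hs : 0 < s) (hsz : s ≤ ρ z / 16) (ζ : ℂ) :
    ‖logPotential (ρ ζ / 8) (z - ζ) - logPotential s (z - ζ)‖ₑ ≤
      (ball z (ρ z)).indicator (fun _ => 2) ζ +
        ENNReal.ofReal (Real.log (ρ z / max ‖z - ζ‖ s)) := by
  have := hρ.pos z
  have h₁ := hρ.le_add_dist hμ z ζ
  have h₂ := hρ.le_add_dist hμ ζ z
  rw [dist_comm ζ z] at h₂
  rw [dist_eq_norm] at h₁ h₂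
  by_cases hζ : ζ ∈ ball z (ρ z)
  · rw [indicator_of_mem hζ, Real.enorm_eq_ofReal_abs]
    rw [mem_ball', dist_eq_norm] at hζ
    have hst : max ‖z - ζ‖ s ≤ max ‖z - ζ‖ (ρ ζ / 8) := by
      refine max_le (le_max_left _ _) ?_
      rcases le_total s ‖z - ζ‖ with h | h
      · exact h.trans (le_max_left _ _)
      · exact le_max_of_le_right (by linarith)
    have hR : max ‖z - ζ‖ (ρ ζ / 8) ≤ ρ z := max_le hζ.le (by linarith)
    refine (ENNReal.ofReal_le_ofReal
      (abs_logPotential_sub_le hs (hρ.div_eight_pos ζ) hst hR)).trans ?_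
    simpa using ENNReal.ofReal_add_le (p := 2) (q := Real.log (ρ z / max ‖z - ζ‖ s))
  · have hfar := (hρ.le_div_eight_or hμ z ζ).resolve_right fun h => hζ h.1
    rw [mem_ball', not_lt, dist_eq_norm] at hζ
    rw [logPotential_sub_eq_zero (hρ.div_eight_pos ζ) hs (max_le hfar (by linarith)), enorm_zero]
    exact zero_le

lemma norm_integral_logPotential_sub_le {z : ℂ} {s : ℝ} (hs : 0 < s) (hsz : s ≤ ρ z / 16) :
    ‖∫ ζ, (logPotential (ρ ζ / 8) (z - ζ) - logPotential s (z - ζ)) ∂μ‖ ≤ 2 + C ^ 3 := by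
  have h : ‖∫ ζ, (logPotential (ρ ζ / 8) (z - ζ) - logPotential s (z - ζ)) ∂μ‖ₑ ≤
      2 + (C : ℝ≥0∞) ^ 3 :=
    calc ‖∫ ζ, (logPotential (ρ ζ / 8) (z - ζ) - logPotential s (z - ζ)) ∂μ‖ₑ
        ≤ ∫⁻ ζ, ((ball z (ρ z)).indicator (fun _ => 2) ζ +
            ENNReal.ofReal (Real.log (ρ z / max ‖z - ζ‖ s))) ∂μ :=
          (enorm_integral_le_lintegral_enorm _).trans
            (lintegral_mono (hρ.enorm_logPotential_sub_le hμ hs hsz))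
      _ = 2 + ∫⁻ ζ, ENNReal.ofReal (Real.log (ρ z / max ‖z - ζ‖ s)) ∂μ := by
          rw [lintegral_add_left (measurable_const.indicator measurableSet_ball),
            lintegral_indicator_const measurableSet_ball, hρ.measure_ball_eq_one, mul_one]
      _ ≤ 2 + (C : ℝ≥0∞) ^ 3 := by
          gcongr
          exact hρ.lintegral_log_div_le hμ z hs
  exact_mod_cast h

lemma abs_regularisedPotential_sub_le {φ : ℂ → ℝ} (hφ : Continuous φ)
    (hlap : ∀ v : ℂ → ℝ, ContDiff ℝ (⊤ : ℕ∞) v → HasCompactSupport v →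
      ∫ z, φ z * lap v z = ∫ z, v z ∂μ) (z : ℂ) :
    |regularisedPotential φ μ (fun ζ => ρ ζ / 8) z - φ z| ≤ 3 + C ^ 3 := by
  obtain ⟨δ, hδ, hφδ⟩ := Metric.continuous_iff.1 hφ z 1 one_pos
  have hs : 0 < min δ (ρ z / 16) := lt_min hδ (div_pos (hρ.pos z) (by norm_num))
  set s := min δ (ρ z / 16)
  rw [regularisedPotential_eq hφ hlap hρ.div_eight_pos (hρ.lipschitzWith_div_eight hμ)
    (by norm_num) hs, add_sub_right_comm]
  have havg : |(∫ ζ, φ ζ * mollifier s (z - ζ)) - φ z| ≤ 1 :=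
    abs_integral_mul_mollifier_sub_le hφ hs zero_le_one fun ζ hζ =>
      (hφδ ζ ((mem_ball.1 hζ).trans_le (min_le_left _ _))).le
  have hint := hρ.norm_integral_logPotential_sub_le hμ hs (min_le_right _ _)
  exact (norm_add_le_of_le havg hint).trans_eq (by ring)

end IsRadius

/-- Regularisation of `φ`: there is a smooth subharmonic `ψ` with `|ψ - φ|` bounded,
whose (pointwise) Laplacian is a doubling measure comparable to `ρ_ψ⁻²` and to
`ρ_φ⁻²`, and with `|∇(Δψ)| ≲ ρ_φ⁻³`. -/
theorem regularisation
    (φ : ℂ → ℝ) (μ : Measure ℂ) (hφ : HasDoublingLaplacian φ μ)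
    (ρ : ℂ → ℝ) (hρ : IsRadius μ ρ) :
    ∃ ψ : ℂ → ℝ, ∃ C : ℝ, 0 < C ∧
      ContDiff ℝ (⊤ : ℕ∞) ψ ∧
      (∀ z, 0 ≤ lap ψ z) ∧
      (∀ z, |ψ z - φ z| ≤ C) ∧
      (∃ Cd : ℝ≥0, 0 < Cd ∧
        IsDoubling (volume.withDensity fun z => ENNReal.ofReal (lap ψ z)) Cd) ∧
      (∃ ρψ : ℂ → ℝ,
        IsRadius (volume.withDensity fun z => ENNReal.ofReal (lap ψ z)) ρψ ∧
        (∀ z, C⁻¹ * (ρψ z ^ 2)⁻¹ ≤ lap ψ z ∧ lap ψ z ≤ C * (ρψ z ^ 2)⁻¹)) ∧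
      (∀ z, C⁻¹ * (ρ z ^ 2)⁻¹ ≤ lap ψ z ∧ lap ψ z ≤ C * (ρ z ^ 2)⁻¹) ∧
      (∀ z, ‖fderiv ℝ (lap ψ) z‖ ≤ C * (ρ z ^ 3)⁻¹) := by
  obtain ⟨C, -, hμ⟩ := hφ.doubling
  have := hρ.isFiniteMeasureOnCompacts hμ
  have hlip := hρ.lipschitzWith_div_eight hμ
  have hlap : lap (regularisedPotential φ μ fun ζ => ρ ζ / 8) = smearedDensity μ fun ζ => ρ ζ / 8 :=
    funext <| lap_regularisedPotential hφ.continuous hφ.lap_eq hρ.div_eight_pos hlip (by norm_num)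
  obtain ⟨K, hK, hcomp, hgrad⟩ := hρ.exists_comparableWith_smearedDensity hμ
  obtain ⟨ρψ, hρψ⟩ := hρ.exists_isRadius_smearedMeasure hμ
  have hdoubling := hρ.isDoubling_smearedMeasure hμ hK hcomp
  have hcomp' := hcomp.trans (hρ.comparableWith_inv_sq hμ hK hcomp hρψ) hK
  have hpos {σ : ℂ → ℝ} {ν : Measure ℂ} (hσ : IsRadius ν σ) (n : ℕ) (z : ℂ) : 0 ≤ (σ z ^ n)⁻¹ :=
    inv_nonneg.2 (pow_nonneg (hσ.pos z).le n)
  have hKA : K ≤ max (3 + (C : ℝ) ^ 3) (max K (K * (16 + 16 * K))) :=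
    (le_max_left _ _).trans (le_max_right _ _)
  refine ⟨regularisedPotential φ μ fun ζ => ρ ζ / 8, _, hK.trans_le hKA,
    contDiff_regularisedPotential hφ.continuous hρ.div_eight_pos hlip (by norm_num), ?_⟩
  rw [hlap]
  exact ⟨smearedDensity_nonneg μ _,
    fun z => (hρ.abs_regularisedPotential_sub_le hμ hφ.continuous hφ.lap_eq z).trans
      (le_max_left _ _),
    ⟨_, one_pos.trans_le (hρψ.one_le_doublingConstant hdoubling), hdoubling⟩,
    ⟨ρψ, hρψ, hcomp'.mono (hpos hρψ 2) (by positivity)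
      ((le_max_right _ _).trans (le_max_right _ _))⟩,
    hcomp.mono (hpos hρ 2) hK hKA,
    fun z => (hgrad z).trans (mul_le_mul_of_nonneg_right hKA (hpos hρ 3 z))⟩

end
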